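/- arXiv:2101.06331 — 7 statements merged into one kernel-verified Lean document; each statement's English description precedes it below -/
import Mathlib

section
/- Let (σ_j)_{j≥1} be a sequence of positive real numbers, ω_j = ω(σ_j), and let n_d(ε) be the average case approximation complexity built from (ω_j). Then the following three conditions are equivalent: (i) for every ε ∈ (0,1), sup_{d∈ℕ} n_d(ε) < ∞; (ii) the series Σ_{j=1}^∞ ω_j converges; (iii) the series Σ_{j=1}^∞ σ_j^{-2} converges. -/
open Filter Set

/-- `ω(σ) = (1 + (σ²/2)(1 + √(1 + 4/σ²)))⁻¹`. -/
noncomputable def omegaFn (σ : ℝ) : ℝ :=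
  (1 + σ ^ 2 / 2 * (1 + Real.sqrt (1 + 4 / σ ^ 2)))⁻¹

/-- The average case approximation complexity `n_d(ε)` built from the sequence `ω`:
the minimal number `n ≥ 1` such that some finite set `S` of multi-indices with `|S| ≤ n`
captures all but `ε²` of the total mass of the eigenvalues
`λ_d(k) = ∏_{j<d} (1 - ω_j) ω_j^{k_j}`, `k : Fin d → ℕ`. -/
noncomputable def avgComplexity (ω : ℕ → ℝ) (d : ℕ) (ε : ℝ) : ℕ :=
  sInf {n : ℕ | 1 ≤ n ∧ ∃ S : Finset (Fin d → ℕ), S.card ≤ n ∧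
    ∑' k : {k : Fin d → ℕ // k ∉ S}, ∏ j : Fin d, (1 - ω j.1) * ω j.1 ^ k.1 j ≤ ε ^ 2}

lemma hasSum_pi_prod : ∀ (d : ℕ) (f : Fin d → ℕ → ℝ) (a : Fin d → ℝ),
    (∀ j n, 0 ≤ f j n) → (∀ j, HasSum (f j) (a j)) →
    HasSum (fun k : Fin d → ℕ => ∏ j, f j (k j)) (∏ j, a j) := by
  intro d
  induction d with
  | zero =>
    intro f a _ _
    simp
  | succ d ih =>
    intro f a hf ha
    have h1 := ih (fun j => f j.succ) (fun j => a j.succ) (fun j n => hf _ n) (fun j => ha _)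
    have hg0 : (0 : (Fin d → ℕ) → ℝ) ≤ fun k => ∏ j, f j.succ (k j) :=
      fun k => Finset.prod_nonneg fun j _ => hf _ _
    have hf0 : (0 : ℕ → ℝ) ≤ f 0 := fun n => hf 0 n
    have hs := Summable.mul_of_nonneg (ha 0).summable h1.summable hf0 hg0
    have h2 := (ha 0).mul h1 hs
    rw [Fin.prod_univ_succ]
    rw [← (Fin.consEquiv (fun _ : Fin (d+1) => ℕ)).hasSum_iff]
    have he : ((fun k : Fin (d+1) → ℕ => ∏ j, f j (k j)) ∘ (Fin.consEquiv (fun _ : Fin (d+1) => ℕ)))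
        = fun x : ℕ × (Fin d → ℕ) => f 0 x.1 * ∏ j, f j.succ (x.2 j) := by
      funext x
      simp [Fin.prod_univ_succ, Fin.consEquiv]
    rw [he]
    exact h2

lemma hasSum_lam (ω : ℕ → ℝ) (h0 : ∀ j, 0 < ω j) (h1 : ∀ j, ω j < 1) (d : ℕ) :
    HasSum (fun k : Fin d → ℕ => ∏ j : Fin d, (1 - ω j.1) * ω j.1 ^ k j) 1 := by
  have := hasSum_pi_prod d (fun j n => (1 - ω j.1) * ω j.1 ^ n) (fun _ => 1)
    (fun j n => mul_nonneg (sub_nonneg.2 (h1 _).le) (pow_nonneg (h0 _).le _))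
    (fun j => by
      have h := (hasSum_geometric_of_lt_one (h0 j.1).le (h1 j.1)).mul_left (1 - ω j.1)
      rwa [mul_inv_cancel₀ (sub_pos.2 (h1 _)).ne'] at h)
  simpa using this

lemma tail_eq (ω : ℕ → ℝ) (h0 : ∀ j, 0 < ω j) (h1 : ∀ j, ω j < 1) (d : ℕ)
    (S : Finset (Fin d → ℕ)) :
    ∑' k : {k : Fin d → ℕ // k ∉ S}, ∏ j : Fin d, (1 - ω j.1) * ω j.1 ^ k.1 j
      = 1 - ∑ k ∈ S, ∏ j : Fin d, (1 - ω j.1) * ω j.1 ^ k j := by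
  have h := hasSum_lam ω h0 h1 d
  have := h.summable.sum_add_tsum_subtype_compl S
  rw [h.tsum_eq] at this
  linarith

lemma box_mass (ω : ℕ → ℝ) (d : ℕ) (M : ℕ → ℕ) :
    ∑ k ∈ Fintype.piFinset (fun j : Fin d => Finset.range (M j)),
      ∏ j : Fin d, (1 - ω j.1) * ω j.1 ^ k j = ∏ j : Fin d, (1 - ω j.1 ^ M j) := by
  rw [← Finset.prod_univ_sum (fun j : Fin d => Finset.range (M j))
    (fun j n => (1 - ω j.1) * ω j.1 ^ n)]
  refine Finset.prod_congr rfl fun j _ => ?_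
  rw [← Finset.mul_sum, mul_neg_geom_sum]

lemma one_sub_sum_le (s : Finset ℕ) (f : ℕ → ℝ) (h0 : ∀ j, 0 ≤ f j) (h1 : ∀ j, f j ≤ 1) :
    1 - ∑ j ∈ s, f j ≤ ∏ j ∈ s, (1 - f j) := by
  induction s using Finset.induction_on with
  | empty => simp
  | insert a s ha ih =>
    rw [Finset.sum_insert ha, Finset.prod_insert ha]
    have h2 : ∏ j ∈ s, (1 - f j) ≤ 1 :=
      Finset.prod_le_one (fun j _ => by linarith [h1 j]) (fun j _ => by linarith [h0 j])
    nlinarith [h0 a]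

lemma bdd_of_summable (ω : ℕ → ℝ) (h0 : ∀ j, 0 < ω j) (h1 : ∀ j, ω j < 1)
    (hs : Summable ω) (ε : ℝ) (hε : 0 < ε) :
    ∃ C : ℕ, ∀ d : ℕ, avgComplexity ω d ε ≤ C := by
  have he : 0 < ε ^ 2 / 2 := by positivity
  obtain ⟨J, hJ⟩ : ∃ J : ℕ, ∑' j, ω (j + J) < ε ^ 2 / 2 :=
    ((tendsto_sum_nat_add ω).eventually (gt_mem_nhds he)).exists
  obtain ⟨M, hM, hM1⟩ : ∃ M : ℕ, ∑ j ∈ Finset.range J, ω j ^ M < ε ^ 2 / 2 ∧ 1 ≤ M := by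
    have ht : Tendsto (fun M : ℕ => ∑ j ∈ Finset.range J, ω j ^ M) atTop (nhds 0) := by
      have := tendsto_finsetSum (Finset.range J) (f := fun j (M : ℕ) => ω j ^ M) (a := fun _ => (0:ℝ))
        (x := atTop) (fun j _ => tendsto_pow_atTop_nhds_zero_of_lt_one (h0 j).le (h1 j))
      simpa using this
    exact ((ht.eventually (gt_mem_nhds he)).and (eventually_ge_atTop 1)).exists
  let N : ℕ → ℕ := fun j => if j < J then M else 1
  have hN : ∀ d, ∏ j ∈ Finset.range d, N j ≤ M ^ J := by
    intro d
    simp only [N, Finset.prod_ite, Finset.prod_const, one_pow, mul_one]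
    refine Nat.pow_le_pow_right hM1 ?_
    calc _ ≤ (Finset.range J).card := Finset.card_le_card (by intro x; simp)
      _ = J := by simp
  have hsum : ∀ d, ∑ j ∈ Finset.range d, ω j ^ N j ≤ ε ^ 2 := by
    intro d
    have hnn : ∀ j, 0 ≤ ω j ^ N j := fun j => pow_nonneg (h0 j).le _
    calc ∑ j ∈ Finset.range d, ω j ^ N j ≤ ∑ j ∈ Finset.range (J + d), ω j ^ N j :=
          Finset.sum_le_sum_of_subset_of_nonneg
            (by intro x; simp; omega) (fun j _ _ => hnn j)
      _ = ∑ j ∈ Finset.range J, ω j ^ N j + ∑ j ∈ Finset.range d, ω (J + j) ^ N (J + j) :=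
          Finset.sum_range_add _ _ _
      _ = ∑ j ∈ Finset.range J, ω j ^ M + ∑ j ∈ Finset.range d, ω (j + J) := by
          congr 1
          · refine Finset.sum_congr rfl fun j hj => ?_
            simp [N, Finset.mem_range.1 hj]
          · refine Finset.sum_congr rfl fun j hj => ?_
            simp [N, add_comm]
      _ ≤ ε ^ 2 / 2 + ε ^ 2 / 2 := by
          refine add_le_add hM.le (le_trans ?_ hJ.le)
          exact ((summable_nat_add_iff J).2 hs).sum_le_tsum _ (fun j _ => (h0 _).le)
      _ = ε ^ 2 := by ring
  refine ⟨M ^ J, fun d => Nat.sInf_le ⟨Nat.one_le_pow _ _ hM1,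
    Fintype.piFinset (fun j : Fin d => Finset.range (N j)), ?_, ?_⟩⟩
  · rw [Fintype.card_piFinset]
    simp only [Finset.card_range]
    rw [Fin.prod_univ_eq_prod_range N d]
    exact hN d
  · rw [tail_eq ω h0 h1, box_mass, Fin.prod_univ_eq_prod_range (fun j => 1 - ω j ^ N j) d]
    have := one_sub_sum_le (Finset.range d) (fun j => ω j ^ N j)
      (fun j => pow_nonneg (h0 j).le _) (fun j => pow_le_one₀ (h0 j).le (h1 j).le)
    linarith [hsum d]

lemma avg_spec (ω : ℕ → ℝ) (h0 : ∀ j, 0 < ω j) (h1 : ∀ j, ω j < 1) (ε : ℝ) (hε : 0 < ε)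
    (d : ℕ) : ∃ S : Finset (Fin d → ℕ), S.card ≤ avgComplexity ω d ε ∧
    ∑' k : {k : Fin d → ℕ // k ∉ S}, ∏ j : Fin d, (1 - ω j.1) * ω j.1 ^ k.1 j ≤ ε ^ 2 := by
  have hne : {n : ℕ | 1 ≤ n ∧ ∃ S : Finset (Fin d → ℕ), S.card ≤ n ∧
    ∑' k : {k : Fin d → ℕ // k ∉ S}, ∏ j : Fin d, (1 - ω j.1) * ω j.1 ^ k.1 j ≤ ε ^ 2}.Nonempty := by
    have h := hasSum_lam ω h0 h1 d
    have hlt : 1 - ε ^ 2 < 1 := by nlinarith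
    obtain ⟨S, hS⟩ := (h.eventually (lt_mem_nhds hlt)).exists
    refine ⟨S.card + 1, by omega, S, by omega, ?_⟩
    rw [tail_eq ω h0 h1]
    linarith
  exact (Nat.sInf_mem hne).2

lemma summable_of_bdd (ω : ℕ → ℝ) (h0 : ∀ j, 0 < ω j) (h1 : ∀ j, ω j < 1)
    (h : ∃ C : ℕ, ∀ d : ℕ, avgComplexity ω d (1/2) ≤ C) : Summable ω := by
  obtain ⟨C, hC⟩ := h
  refine summable_of_sum_range_le (c := Real.log (2 * C)) (fun j => (h0 j).le) fun d => ?_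
  obtain ⟨S, hS, hm⟩ := avg_spec ω h0 h1 (1/2) (by norm_num) d
  rw [tail_eq ω h0 h1] at hm
  set P := ∏ j : Fin d, (1 - ω j.1) with hP
  have hP0 : 0 < P := Finset.prod_pos fun j _ => sub_pos.2 (h1 _)
  have hle : ∑ k ∈ S, ∏ j : Fin d, (1 - ω j.1) * ω j.1 ^ k j ≤ S.card * P := by
    rw [← nsmul_eq_mul]
    refine Finset.sum_le_card_nsmul _ _ _ fun k _ => ?_
    refine Finset.prod_le_prod (fun j _ => mul_nonneg (sub_nonneg.2 (h1 _).le)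
      (pow_nonneg (h0 _).le _)) fun j _ => ?_
    exact mul_le_of_le_one_right (sub_nonneg.2 (h1 _).le) (pow_le_one₀ (h0 _).le (h1 _).le)
  have hSC : (S.card : ℝ) ≤ C := by exact_mod_cast hS.trans (hC d)
  have hCP : 1 / 2 ≤ C * P := by nlinarith
  have hPe : P ≤ Real.exp (-∑ j ∈ Finset.range d, ω j) := by
    rw [hP, Fin.prod_univ_eq_prod_range (fun j => 1 - ω j) d, ← Finset.sum_neg_distrib, Real.exp_sum]
    refine Finset.prod_le_prod (fun j _ => sub_nonneg.2 (h1 _).le) fun j _ => ?_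
    linarith [Real.add_one_le_exp (-ω j)]
  have hCpos : (0:ℝ) < C := by
    by_contra hc
    nlinarith
  rw [Real.le_log_iff_exp_le (by positivity)]
  have hE := Real.exp_pos (∑ j ∈ Finset.range d, ω j)
  rw [Real.exp_neg] at hPe
  have h3 : 1 / 2 ≤ C * (Real.exp (∑ j ∈ Finset.range d, ω j))⁻¹ :=
    hCP.trans (mul_le_mul_of_nonneg_left hPe hCpos.le)
  rw [← div_eq_mul_inv, le_div_iff₀ hE] at h3
  linarith

lemma omega_aux (s : ℝ) (hs : 0 < s) : ∃ x : ℝ, s ≤ x ∧ x ^ 2 = s ^ 2 * 0 + s * (x + 1) ∧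
    x = s / 2 * (1 + Real.sqrt (1 + 4 / s)) := by
  refine ⟨_, ?_, ?_, rfl⟩
  · have : 1 ≤ Real.sqrt (1 + 4 / s) := by
      rw [Real.one_le_sqrt]
      have : 0 < 4 / s := by positivity
      linarith
    nlinarith
  · have h : Real.sqrt (1 + 4 / s) ^ 2 = 1 + 4 / s := Real.sq_sqrt (by positivity)
    have h2 : s * Real.sqrt (1 + 4 / s) ^ 2 = s + 4 := by rw [h]; field_simp
    linear_combination (s / 4) * h2

theorem boundedness_criterion (σ : ℕ → ℝ) (hσ : ∀ j, 0 < σ j) :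
    ((∀ ε ∈ Set.Ioo (0 : ℝ) 1, ∃ C : ℕ, ∀ d : ℕ,
        avgComplexity (fun j => omegaFn (σ j)) d ε ≤ C)
      ↔ Summable fun j => omegaFn (σ j))
    ∧ ((Summable fun j => omegaFn (σ j)) ↔ Summable fun j => ((σ j) ^ 2)⁻¹) := by
  have key : ∀ j, ∃ x : ℝ, (σ j) ^ 2 ≤ x ∧ x ^ 2 = (σ j) ^ 2 * (x + 1) ∧
      omegaFn (σ j) = (1 + x)⁻¹ := by
    intro j
    obtain ⟨x, h1, h2, h3⟩ := omega_aux ((σ j) ^ 2) (pow_pos (hσ j) 2)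
    exact ⟨x, h1, by linarith, by rw [omegaFn, h3]⟩
  have hs : ∀ j, 0 < (σ j) ^ 2 := fun j => pow_pos (hσ j) 2
  have h0 : ∀ j, 0 < omegaFn (σ j) := fun j => by
    obtain ⟨x, hx, -, h⟩ := key j
    rw [h]; have := hs j; exact inv_pos.2 (by linarith)
  have h1 : ∀ j, omegaFn (σ j) < 1 := fun j => by
    obtain ⟨x, hx, -, h⟩ := key j
    rw [h]; have := hs j; exact inv_lt_one_of_one_lt₀ (by linarith)
  refine ⟨⟨fun h => ?_, fun h ε hε => ?_⟩, fun h => ?_, fun h => ?_⟩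
  · exact summable_of_bdd _ h0 h1 (h (1/2) (by norm_num))
  · exact bdd_of_summable _ h0 h1 h ε hε.1
  · refine Summable.of_norm_bounded_eventually_nat (h.mul_left 4) ?_
    have hhalf : (0:ℝ) < 1/2 := by norm_num
    filter_upwards [h.tendsto_atTop_zero.eventually (gt_mem_nhds hhalf)] with j hj
    obtain ⟨x, hx, hx2, hw⟩ := key j
    have := hs j
    rw [hw] at hj ⊢
    have hx1 : 1 ≤ x := by
      rw [inv_lt_comm₀ (by linarith) (by norm_num)] at hj
      norm_num at hj
      linarith
    rw [Real.norm_of_nonneg (inv_nonneg.2 this.le), ← div_eq_mul_inv, inv_eq_one_div,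
      div_le_div_iff₀ this (by linarith)]
    have h4 : 1 * (1 + x) * (1 + x) ≤ 4 * (σ j) ^ 2 * (1 + x) := by nlinarith
    exact le_of_mul_le_mul_right h4 (by linarith)
  · refine Summable.of_nonneg_of_le (fun j => (h0 j).le) (fun j => ?_) h
    obtain ⟨x, hx, -, hw⟩ := key j
    rw [hw]
    exact inv_anti₀ (hs j) (by linarith)
end

section
/- Let (σ_j)_{j≥1} be a sequence of positive real numbers, ω_j = ω(σ_j), and let n_d(ε) be the average case approximation complexity built from (ω_j). Then the following three conditions are equivalent: (i) for every ε ∈ (0,1), n_d(ε) → ∞ as d → ∞; (ii) the series Σ_{j=1}^∞ ω_j diverges; (iii) the series Σ_{j=1}^∞ σ_j^{-2} diverges. -/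
open Filter Set

lemma omegaFn_props {s : ℝ} (hs : 0 < s) :
    0 < omegaFn s ∧ omegaFn s < 1 ∧ (s ^ 2)⁻¹ = omegaFn s / (1 - omegaFn s) ^ 2 := by
  unfold omegaFn
  have h1 : 0 < s ^ 2 := by positivity
  set t := s ^ 2 with ht
  have hr0 := Real.sqrt_nonneg (1 + 4 / t)
  have hr : Real.sqrt (1 + 4 / t) ^ 2 = 1 + 4 / t := Real.sq_sqrt (by positivity)
  set r := Real.sqrt (1 + 4 / t) with hrdef
  have hv : 0 < t / 2 * (1 + r) := by positivity
  have hv2 : (t / 2 * (1 + r)) ^ 2 = t * (1 + t / 2 * (1 + r)) := by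
    have : t * r ^ 2 = t + 4 := by rw [hr]; field_simp
    linear_combination (t / 4) * this
  set v := t / 2 * (1 + r) with hvdef
  refine ⟨by positivity, inv_lt_one_of_one_lt₀ (by linarith), ?_⟩
  have h2 : 1 - (1 + v)⁻¹ = v / (1 + v) := by
    field_simp
    ring
  rw [h2, div_pow, hv2]
  field_simp

lemma lam_le (ω : ℕ → ℝ) (h0 : ∀ j, 0 < ω j) (h1 : ∀ j, ω j < 1) (d : ℕ) (k : Fin d → ℕ) :
    ∏ j : Fin d, (1 - ω j.1) * ω j.1 ^ k j ≤ Real.exp (-∑ j ∈ Finset.range d, ω j) := by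
  rw [← Finset.sum_neg_distrib, Real.exp_sum, ← Fin.prod_univ_eq_prod_range
    (fun j => Real.exp (-ω j))]
  refine Finset.prod_le_prod (fun j _ =>
    mul_nonneg (by linarith [h1 j]) (pow_nonneg (h0 j).le _)) fun j _ => ?_
  have ha : ω j.1 ^ k j ≤ 1 := pow_le_one₀ (h0 j).le (h1 j).le
  have hb := Real.add_one_le_exp (-ω j.1)
  nlinarith [h1 j.1]

lemma tendsto_of_not_summable (ω : ℕ → ℝ) (h0 : ∀ j, 0 < ω j) (h1 : ∀ j, ω j < 1)
    (hns : ¬ Summable ω) (ε : ℝ) (hε : ε ∈ Set.Ioo (0 : ℝ) 1) :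
    Tendsto (fun d : ℕ => avgComplexity ω d ε) atTop atTop := by
  have hS : Tendsto (fun d => ∑ j ∈ Finset.range d, ω j) atTop atTop :=
    (not_summable_iff_tendsto_nat_atTop_of_nonneg fun j => (h0 j).le).1 hns
  have hE : Tendsto (fun d => Real.exp (-∑ j ∈ Finset.range d, ω j)) atTop (nhds 0) :=
    Real.tendsto_exp_neg_atTop_nhds_zero.comp hS
  have he : 0 < 1 - ε ^ 2 := by nlinarith [hε.1, hε.2]
  rw [tendsto_atTop]
  intro N
  have hpos : 0 < (1 - ε ^ 2) / (N + 1) := by positivity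
  filter_upwards [hE.eventually (gt_mem_nhds hpos)] with d hd
  have hne : {n : ℕ | 1 ≤ n ∧ ∃ S : Finset (Fin d → ℕ), S.card ≤ n ∧
    ∑' k : {k : Fin d → ℕ // k ∉ S},
      ∏ j : Fin d, (1 - ω j.1) * ω j.1 ^ k.1 j ≤ ε ^ 2}.Nonempty := by
    have h := hasSum_lam ω h0 h1 d
    have hlt : 1 - ε ^ 2 < 1 := by nlinarith [hε.1]
    obtain ⟨S, hS⟩ := (Filter.Tendsto.eventually h (lt_mem_nhds hlt)).exists
    refine ⟨S.card + 1, by omega, S, by omega, ?_⟩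
    rw [tail_eq ω h0 h1]
    linarith
  obtain ⟨_, S, hc, hle⟩ := Nat.sInf_mem hne
  change S.card ≤ avgComplexity ω d ε at hc
  refine le_trans ?_ hc
  rw [tail_eq ω h0 h1] at hle
  have hb := Finset.sum_le_card_nsmul S _ _ (fun k _ => lam_le ω h0 h1 d k)
  rw [nsmul_eq_mul] at hb
  by_contra! hlt
  have hlt' : (S.card : ℝ) ≤ N + 1 := by
    have : (S.card : ℝ) < N := by exact_mod_cast hlt
    linarith
  rw [lt_div_iff₀ (by positivity)] at hd
  have := mul_le_mul_of_nonneg_right hlt' (Real.exp_pos (-∑ j ∈ Finset.range d, ω j)).le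
  linarith

lemma not_tendsto_of_summable (ω : ℕ → ℝ) (h0 : ∀ j, 0 < ω j) (h1 : ∀ j, ω j < 1)
    (hs : Summable fun j => ω j / (1 - ω j)) :
    ∃ ε ∈ Set.Ioo (0 : ℝ) 1, ∀ d, avgComplexity ω d ε ≤ 1 := by
  have hx : ∀ j, 0 < ω j / (1 - ω j) := fun j => div_pos (h0 j) (by linarith [h1 j])
  set T := ∑' j, ω j / (1 - ω j) with hT
  have hTpos : 0 < T := hs.tsum_pos (fun j => (hx j).le) 0 (hx 0)
  have hc0 := Real.exp_pos (-T)
  have hc1 : Real.exp (-T) < 1 := by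
    rw [← Real.exp_zero]
    exact Real.exp_lt_exp.2 (by linarith)
  have hsq : Real.sqrt (1 - Real.exp (-T)) ^ 2 = 1 - Real.exp (-T) :=
    Real.sq_sqrt (by linarith)
  refine ⟨Real.sqrt (1 - Real.exp (-T)), ⟨Real.sqrt_pos.2 (by linarith), ?_⟩, fun d => ?_⟩
  · rw [Real.sqrt_lt' one_pos]
    linarith
  · refine Nat.sInf_le ⟨le_rfl, {0}, by simp, ?_⟩
    rw [tail_eq ω h0 h1, hsq, Finset.sum_singleton]
    have hP : Real.exp (-T) ≤ ∏ j : Fin d, (1 - ω j.1) * ω j.1 ^ (0 : Fin d → ℕ) j := by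
      calc Real.exp (-T) ≤ Real.exp (-∑ j ∈ Finset.range d, ω j / (1 - ω j)) := by
            apply Real.exp_le_exp.2
            have := hs.sum_le_tsum (Finset.range d) (fun j _ => (hx j).le)
            linarith
        _ ≤ _ := by
            rw [← Finset.sum_neg_distrib, Real.exp_sum, ← Fin.prod_univ_eq_prod_range
              (fun j => Real.exp (-(ω j / (1 - ω j))))]
            refine Finset.prod_le_prod (fun j _ => (Real.exp_pos _).le) fun j _ => ?_
            have hp : 0 < 1 - ω j.1 := by linarith [h1 j.1]
            have hb := Real.add_one_le_exp (ω j.1 / (1 - ω j.1))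
            have he : ω j.1 / (1 - ω j.1) + 1 = (1 - ω j.1)⁻¹ := by
              field_simp
              ring
            rw [he] at hb
            rw [Real.exp_neg]
            simpa using inv_anti₀ (inv_pos.2 hp) hb
    linarith

lemma summable_omega_iff (σ : ℕ → ℝ) (hσ : ∀ j, 0 < σ j) :
    (Summable fun j => omegaFn (σ j)) ↔ Summable fun j => ((σ j) ^ 2)⁻¹ := by
  constructor
  · intro h
    refine (h.mul_left 4).of_norm_bounded_eventually_nat ?_
    have ht := h.tendsto_atTop_zero
    filter_upwards [ht.eventually (gt_mem_nhds (show (0 : ℝ) < 1 / 2 by norm_num))] with j hj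
    obtain ⟨h0, h1, he⟩ := omegaFn_props (hσ j)
    rw [Real.norm_of_nonneg (by positivity), he,
      div_le_iff₀ (by have : 0 < 1 - omegaFn (σ j) := by linarith
                      positivity)]
    have : 1 / 4 ≤ (1 - omegaFn (σ j)) ^ 2 := by nlinarith
    nlinarith
  · intro h
    refine Summable.of_nonneg_of_le (fun j => (omegaFn_props (hσ j)).1.le) (fun j => ?_) h
    obtain ⟨h0, h1, he⟩ := omegaFn_props (hσ j)
    have hp : 0 < 1 - omegaFn (σ j) := by linarith
    rw [he, le_div_iff₀ (by positivity)]
    have : (1 - omegaFn (σ j)) ^ 2 ≤ 1 := by nlinarith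
    nlinarith

/-- Criterion of unboundedness: `n_d(ε) → ∞` as `d → ∞` for every `ε ∈ (0,1)` iff
`Σ ω_j = ∞` iff `Σ σ_j⁻² = ∞`. -/
theorem unboundedness_criterion (σ : ℕ → ℝ) (hσ : ∀ j, 0 < σ j) :
    ((∀ ε ∈ Set.Ioo (0 : ℝ) 1,
        Tendsto (fun d : ℕ => avgComplexity (fun j => omegaFn (σ j)) d ε) atTop atTop)
      ↔ ¬ Summable fun j => omegaFn (σ j))
    ∧ ((¬ Summable fun j => omegaFn (σ j)) ↔ ¬ Summable fun j => ((σ j) ^ 2)⁻¹) := by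
  have h0 : ∀ j, 0 < omegaFn (σ j) := fun j => (omegaFn_props (hσ j)).1
  have h1 : ∀ j, omegaFn (σ j) < 1 := fun j => (omegaFn_props (hσ j)).2.1
  refine ⟨⟨fun h hs => ?_, fun h ε hε => tendsto_of_not_summable _ h0 h1 h ε hε⟩,
    not_congr (summable_omega_iff σ hσ)⟩
  have hs2 : Summable fun j => omegaFn (σ j) / (1 - omegaFn (σ j)) := by
    refine Summable.of_nonneg_of_le
      (fun j => div_nonneg (h0 j).le (by linarith [h1 j])) (fun j => ?_)
      ((summable_omega_iff σ hσ).1 hs)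
    have hp : 0 < 1 - omegaFn (σ j) := by linarith [h1 j]
    rw [(omegaFn_props (hσ j)).2.2]
    refine div_le_div_of_nonneg_left (h0 j).le (by positivity) ?_
    nlinarith [h0 j]
  obtain ⟨ε, hε, hb⟩ := not_tendsto_of_summable (fun j => omegaFn (σ j)) h0 h1 hs2
  obtain ⟨d, hd⟩ := ((h ε hε).eventually_ge_atTop 2).exists
  have := hb d
  omega
end

section
/- Let d ≥ 1, let ω_1,…,ω_d ∈ (0,1) and let x > 0. Then Σ_{j=1}^d [ Σ_{k∈ℕ, k≥1, k|ln ω_j| ≤ x} k²|ln ω_j|²(1−ω_j)ω_j^k − ( Σ_{k∈ℕ, k≥1, k|ln ω_j| ≤ x} k|ln ω_j|(1−ω_j)ω_j^k )² ] = Σ_{j≤d : |ln ω_j| ≤ x} |ln ω_j|²ω_j/(1−ω_j)² − Σ_{j≤d : |ln ω_j| ≤ x} (|ln ω_j|² ω_j^{k_j(x)}/(1−ω_j)²) · ( k_j(x)²(1−ω_j)²(1 + ω_j^{k_j(x)}) + 2k_j(x)(1−ω_j)ω_j^{k_j(x)+1} + (1−ω_j)ω_j + ω_j^{k_j(x)+2}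 ), where k_j(x) = min{k ∈ ℕ : k ≥ 2 and k|ln ω_j| > x}. -/
/-- `k_j(x) = min{k ∈ ℕ : k ≥ 2, k|ln ω| > x}`. -/
noncomputable def kmin (ω x : ℝ) : ℕ :=
  sInf {k : ℕ | 2 ≤ k ∧ x < (k : ℝ) * |Real.log ω|}

theorem aux_s1 (w : ℝ) (hw : 1 - w ≠ 0) (n : ℕ) :
    ∑ k ∈ Finset.range n, (k : ℝ) * (1 - w) * w ^ k
      = w / (1 - w) - w ^ n * (n + w / (1 - w)) := by
  induction n with
  | zero => simp
  | succ n ih =>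
    rw [Finset.sum_range_succ, ih]
    push_cast
    field_simp
    ring

theorem aux_s2 (w : ℝ) (hw : 1 - w ≠ 0) (n : ℕ) :
    ∑ k ∈ Finset.range n, (k : ℝ) ^ 2 * (1 - w) * w ^ k
      = w * (1 + w) / (1 - w) ^ 2
        - w ^ n * (n ^ 2 + 2 * n * w / (1 - w) + w * (1 + w) / (1 - w) ^ 2) := by
  induction n with
  | zero => simp
  | succ n ih =>
    rw [Finset.sum_range_succ, ih]
    push_cast
    field_simp
    ring

theorem kmin_iff (w x : ℝ) (h0 : 0 < |Real.log w|) (hx : |Real.log w| ≤ x) (k : ℕ) :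
    (k : ℝ) * |Real.log w| ≤ x ↔ k < kmin w x := by
  have hne : {k : ℕ | 2 ≤ k ∧ x < (k : ℝ) * |Real.log w|}.Nonempty := by
    obtain ⟨n, hn⟩ := exists_nat_gt (x / |Real.log w|)
    rw [div_lt_iff₀ h0] at hn
    refine ⟨n + 2, by omega, ?_⟩
    push_cast
    nlinarith
  have hm := Nat.sInf_mem hne
  constructor
  · intro h
    by_contra! hc
    have h1 : (kmin w x : ℝ) ≤ k := by exact_mod_cast hc
    have h2 : x < (kmin w x : ℝ) * |Real.log w| := hm.2
    nlinarith
  · intro h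
    have h1 := Nat.notMem_of_lt_sInf h
    by_contra! hc
    apply h1
    refine ⟨?_, hc⟩
    by_contra! h2
    have h3 : (k : ℝ) ≤ 1 := by exact_mod_cast (by omega : k ≤ 1)
    nlinarith

theorem aux_tsum (w x : ℝ) (h0 : 0 < |Real.log w|) (hx : |Real.log w| ≤ x) (f : ℕ → ℝ)
    (hf : f 0 = 0) :
    (∑' k : ℕ, if 1 ≤ k ∧ (k : ℝ) * |Real.log w| ≤ x then f k else 0)
      = ∑ k ∈ Finset.range (kmin w x), f k := by
  rw [tsum_eq_sum (s := Finset.range (kmin w x))]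
  · refine Finset.sum_congr rfl fun k hk => ?_
    rcases Nat.eq_zero_or_pos k with rfl | hp
    · simp [hf]
    · rw [if_pos ⟨hp, (kmin_iff w x h0 hx k).2 (Finset.mem_range.1 hk)⟩]
  · intro k hk
    rw [if_neg]
    exact fun h => hk (Finset.mem_range.2 ((kmin_iff w x h0 hx k).1 h.2))

theorem aux_zero (w x : ℝ) (hx : ¬ |Real.log w| ≤ x) (f : ℕ → ℝ) :
    (∑' k : ℕ, if 1 ≤ k ∧ (k : ℝ) * |Real.log w| ≤ x then f k else 0) = 0 := by
  have : ∀ k : ℕ, (if 1 ≤ k ∧ (k : ℝ) * |Real.log w| ≤ x then f k else 0) = 0 := by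
    intro k
    rw [if_neg]
    rintro ⟨h1, h2⟩
    have h3 : (1 : ℝ) ≤ k := by exact_mod_cast h1
    have := abs_nonneg (Real.log w)
    nlinarith
  simp [this]

/-- Third identity of the key lemma (truncated variances). -/
theorem sum_truncated_variance_identity (d : ℕ) (hd : 1 ≤ d) (ω : Fin d → ℝ)
    (hω : ∀ j, ω j ∈ Set.Ioo (0 : ℝ) 1) (x : ℝ) (hx : 0 < x) :
    ∑ j : Fin d,
        ((∑' k : ℕ, if 1 ≤ k ∧ (k : ℝ) * |Real.log (ω j)| ≤ x then
            (k : ℝ) ^ 2 * |Real.log (ω j)| ^ 2 * (1 - ω j) * ω j ^ k else 0)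
          - (∑' k : ℕ, if 1 ≤ k ∧ (k : ℝ) * |Real.log (ω j)| ≤ x then
              (k : ℝ) * |Real.log (ω j)| * (1 - ω j) * ω j ^ k else 0) ^ 2)
      = (∑ j ∈ Finset.univ.filter (fun j : Fin d => |Real.log (ω j)| ≤ x),
            |Real.log (ω j)| ^ 2 * ω j / (1 - ω j) ^ 2)
        - ∑ j ∈ Finset.univ.filter (fun j : Fin d => |Real.log (ω j)| ≤ x),
            |Real.log (ω j)| ^ 2 * ω j ^ kmin (ω j) x / (1 - ω j) ^ 2
              * ((kmin (ω j) x : ℝ) ^ 2 * (1 - ω j) ^ 2 * (1 + ω j ^ kmin (ω j) x)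
                + 2 * (kmin (ω j) x : ℝ) * (1 - ω j) * ω j ^ (kmin (ω j) x + 1)
                + (1 - ω j) * ω j + ω j ^ (kmin (ω j) x + 2)) := by
  rw [← Finset.sum_sub_distrib, Finset.sum_filter]
  refine Finset.sum_congr rfl fun j _ => ?_
  obtain ⟨hw0, hw1⟩ := hω j
  generalize ω j = w at *
  have h0 : 0 < |Real.log w| := abs_pos.2 (Real.log_neg hw0 hw1).ne
  split_ifs with h
  · have hw : 1 - w ≠ 0 := by linarith
    rw [aux_tsum w x h0 h (fun k => (k : ℝ) ^ 2 * |Real.log w| ^ 2 * (1 - w) * w ^ k) (by simp),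
      aux_tsum w x h0 h (fun k => (k : ℝ) * |Real.log w| * (1 - w) * w ^ k) (by simp)]
    generalize kmin w x = n
    generalize |Real.log w| = L
    have e2 : ∑ k ∈ Finset.range n, (k : ℝ) ^ 2 * L ^ 2 * (1 - w) * w ^ k
        = L ^ 2 * ∑ k ∈ Finset.range n, (k : ℝ) ^ 2 * (1 - w) * w ^ k := by
      rw [Finset.mul_sum]
      exact Finset.sum_congr rfl fun k _ => by ring
    have e1 : ∑ k ∈ Finset.range n, (k : ℝ) * L * (1 - w) * w ^ k
        = L * ∑ k ∈ Finset.range n, (k : ℝ) * (1 - w) * w ^ k := by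
      rw [Finset.mul_sum]
      exact Finset.sum_congr rfl fun k _ => by ring
    rw [e1, e2, aux_s1 w hw, aux_s2 w hw, pow_add, pow_add]
    generalize w ^ n = W
    field_simp
    ring
  · rw [aux_zero w x h (fun k => (k : ℝ) ^ 2 * |Real.log w| ^ 2 * (1 - w) * w ^ k),
      aux_zero w x h (fun k => (k : ℝ) * |Real.log w| * (1 - w) * w ^ k)]
    simp
end

section
/- Let d ≥ 1, let ω_1,…,ω_d ∈ (0,1) and let X > 0. Then Σ_{j≤d : |ln ω_j| ≤ X} (|ln ω_j| ω_j^{k_j(X)}/(1−ω_j)) · (k_j(X)(1−ω_j) + ω_j) ≤ (2X + 1) · Σ_{j≤d : |ln ω_j| ≤ X} ω_j^{k_j(X)}, where k_j(X) = min{k ∈ ℕ : k ≥ 2 and k|ln ω_j| > X}. -/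
/-- The remainder `R₁` is bounded: for `ω_j ∈ (0,1)` and `X > 0`,
`Σ_{j : |ln ω_j|≤X} (|ln ω_j|ω_j^{k_j(X)}/(1-ω_j))(k_j(X)(1-ω_j)+ω_j)
  ≤ (2X+1) Σ_{j : |ln ω_j|≤X} ω_j^{k_j(X)}`. -/
theorem remainder_R1_bound (d : ℕ) (hd : 1 ≤ d) (ω : Fin d → ℝ)
    (hω : ∀ j, ω j ∈ Set.Ioo (0 : ℝ) 1) (X : ℝ) (hX : 0 < X) :
    ∑ j ∈ Finset.univ.filter (fun j : Fin d => |Real.log (ω j)| ≤ X),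
        |Real.log (ω j)| * ω j ^ kmin (ω j) X / (1 - ω j)
          * ((kmin (ω j) X : ℝ) * (1 - ω j) + ω j)
      ≤ (2 * X + 1) *
          ∑ j ∈ Finset.univ.filter (fun j : Fin d => |Real.log (ω j)| ≤ X),
            ω j ^ kmin (ω j) X := by
  rw [Finset.mul_sum]
  apply Finset.sum_le_sum
  intro j hj
  have hL : |Real.log (ω j)| ≤ X := by simpa using hj
  obtain ⟨h0, h1⟩ := hω j
  have hlog : Real.log (ω j) < 0 := Real.log_neg h0 h1
  have hLpos : 0 < |Real.log (ω j)| := abs_pos.mpr hlog.ne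
  have hL1 : |Real.log (ω j)| * ω j ≤ 1 - ω j := by
    have h := Real.one_sub_inv_le_log_of_pos h0
    rw [abs_of_neg hlog]
    have h2 := mul_le_mul_of_nonneg_right h h0.le
    rw [sub_mul, inv_mul_cancel₀ h0.ne'] at h2
    linarith
  have hne : {k : ℕ | 2 ≤ k ∧ X < (k : ℝ) * |Real.log (ω j)|}.Nonempty := by
    obtain ⟨n, hn⟩ := exists_nat_gt (X / |Real.log (ω j)|)
    rw [div_lt_iff₀ hLpos] at hn
    refine ⟨n + 2, by omega, ?_⟩
    push_cast
    nlinarith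
  have hmem : 2 ≤ kmin (ω j) X ∧ X < (kmin (ω j) X : ℝ) * |Real.log (ω j)| := Nat.sInf_mem hne
  have hk : (kmin (ω j) X : ℝ) * |Real.log (ω j)| ≤ 2 * X := by
    rcases hmem.1.eq_or_lt with h | h
    · rw [← h]
      push_cast
      linarith
    · have hnot : kmin (ω j) X - 1 ∉ {k : ℕ | 2 ≤ k ∧ X < (k : ℝ) * |Real.log (ω j)|} :=
        Nat.notMem_of_lt_sInf (show kmin (ω j) X - 1 < kmin (ω j) X by omega)
      have h3 : ¬ X < ((kmin (ω j) X - 1 : ℕ) : ℝ) * |Real.log (ω j)| :=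
        fun h4 => hnot ⟨by omega, h4⟩
      rw [Nat.cast_sub (by omega)] at h3
      push_cast at h3
      linarith
  generalize kmin (ω j) X = k at *
  have hp : 0 < ω j ^ k := pow_pos h0 k
  have h1' : 0 < 1 - ω j := by linarith
  rw [div_mul_eq_mul_div, div_le_iff₀ h1']
  have e1 := mul_le_mul_of_nonneg_right hk h1'.le
  have e2 := mul_le_mul_of_nonneg_left (add_le_add e1 hL1) hp.le
  linarith
end

section
/- Let d ≥ 1, let ω_1,…,ω_d ∈ (0,1) and let X > 0. Then Σ_{j≤d : |ln ω_j| ≤ X} (|ln ω_j|² ω_j^{k_j(X)}/(1−ω_j)²) · ( k_j(X)²(1−ω_j)²(1 + ω_j^{k_j(X)}) + 2k_j(X)(1−ω_j)ω_j^{k_j(X)+1} + (1−ω_j)ω_j + ω_j^{k_j(X)+2} ) ≤ (8X² + 4X + 2) · Σ_{j≤d : |ln ω_j| ≤ X} ω_j^{k_j(X)}, where k_j(X) = min{k ∈ ℕ : k ≥ 2 and k|ln ω_j| > X}. -/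
/-- The one-term estimate, with `k L ≤ 2 X` as a hypothesis. -/
lemma term_bound (w L X k p : ℝ) (hw0 : 0 < w) (hw1 : w < 1) (hL : 0 ≤ L) (hk : 0 ≤ k)
    (hp0 : 0 ≤ p) (hp1 : p ≤ 1) (hkL : k * L ≤ 2 * X) (h1 : L * w ≤ 1 - w)
    (h2 : L ^ 2 * w ≤ (1 - w) ^ 2) :
    L ^ 2 * p / (1 - w) ^ 2 * (k ^ 2 * (1 - w) ^ 2 * (1 + p) + 2 * k * (1 - w) * (p * w)
      + (1 - w) * w + p * w ^ 2) ≤ (8 * X ^ 2 + 4 * X + 2) * p := by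
  have hv : 0 < 1 - w := by linarith
  have hkL0 : 0 ≤ k * L := mul_nonneg hk hL
  have e : L ^ 2 * p / (1 - w) ^ 2 * (k ^ 2 * (1 - w) ^ 2 * (1 + p) + 2 * k * (1 - w) * (p * w)
      + (1 - w) * w + p * w ^ 2) = ((k * L) ^ 2 * (1 + p) + 2 * (k * L) * (p * (L * w / (1 - w)))
      + (L ^ 2 * w / (1 - w) ^ 2) * (1 - w) + p * (L * w / (1 - w)) ^ 2) * p := by
    field_simp
  rw [e]
  have ha1 : L * w / (1 - w) ≤ 1 := (div_le_one hv).2 h1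
  have ha0 : 0 ≤ L * w / (1 - w) := by positivity
  have hb1 : L ^ 2 * w / (1 - w) ^ 2 ≤ 1 := (div_le_one (by positivity)).2 h2
  have hb0 : 0 ≤ L ^ 2 * w / (1 - w) ^ 2 := by positivity
  generalize L * w / (1 - w) = a at *
  generalize L ^ 2 * w / (1 - w) ^ 2 = b at *
  apply mul_le_mul_of_nonneg_right _ hp0
  have t1 : (k * L) ^ 2 * (1 + p) ≤ (2 * X) ^ 2 * 2 := by
    gcongr
    linarith
  have hpa : p * a ≤ 1 := mul_le_one₀ hp1 ha0 ha1
  have t2 : 2 * (k * L) * (p * a) ≤ 2 * (2 * X) * 1 := by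
    gcongr
    linarith
  have t3 : b * (1 - w) ≤ 1 := mul_le_one₀ hb1 hv.le (by linarith)
  have t4 : p * a ^ 2 ≤ 1 := mul_le_one₀ hp1 (by positivity) (pow_le_one₀ ha0 ha1)
  linarith

lemma kmin_mul_le (w X : ℝ) (hL : |Real.log w| ≤ X) (h0 : 0 < |Real.log w|) :
    (kmin w X : ℝ) * |Real.log w| ≤ 2 * X := by
  have hne : {k : ℕ | 2 ≤ k ∧ X < (k : ℝ) * |Real.log w|}.Nonempty := by
    obtain ⟨n, hn⟩ := exists_nat_gt (X / |Real.log w|)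
    refine ⟨n + 2, by omega, ?_⟩
    rw [div_lt_iff₀ h0] at hn
    push_cast
    linarith
  have hm : 2 ≤ kmin w X := (Nat.sInf_mem hne).1
  by_cases h : kmin w X = 2
  · rw [h]
    push_cast
    linarith
  · have hlt : kmin w X - 1 < kmin w X := by omega
    have hn := Nat.notMem_of_lt_sInf hlt
    simp only [Set.mem_setOf_eq, not_and, not_lt] at hn
    have := hn (by omega)
    rw [Nat.cast_sub (by omega)] at this
    push_cast at this
    linarith

lemma log_bounds (w : ℝ) (hw0 : 0 < w) (hw1 : w < 1) :
    |Real.log w| * w ≤ 1 - w ∧ |Real.log w| ^ 2 * w ≤ (1 - w) ^ 2 := by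
  have hneg := Real.log_neg hw0 hw1
  rw [abs_of_neg hneg]
  constructor
  · have := Real.one_sub_inv_le_log_of_pos hw0
    have h := mul_le_mul_of_nonneg_right this hw0.le
    rw [sub_mul, inv_mul_cancel₀ hw0.ne'] at h
    linarith
  · have h := Real.self_le_sinh_iff.2 (by linarith : 0 ≤ -Real.log w / 2)
    rw [Real.sinh_eq] at h
    set s := Real.exp (-(-Real.log w / 2)) with hs
    have hs0 : 0 < s := Real.exp_pos _
    have hsw : s * s = w := by
      rw [hs, ← Real.exp_add]
      ring_nf
      exact Real.exp_log hw0
    have hinv : Real.exp (-Real.log w / 2) * s = 1 := by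
      rw [hs, ← Real.exp_add]
      simp
    have h3 : -Real.log w * s ≤ 1 - w := by
      have := mul_le_mul_of_nonneg_right h hs0.le
      nlinarith
    have h4 : 0 ≤ -Real.log w * s := mul_nonneg (by linarith) hs0.le
    calc (-Real.log w) ^ 2 * w = (-Real.log w * s) ^ 2 := by rw [← hsw]; ring
      _ ≤ (1 - w) ^ 2 := by gcongr

/-- The remainder `R₂` is bounded: for `ω_j ∈ (0,1)` and `X > 0`,
the `R₂`-sum is at most `(8X² + 4X + 2) Σ_{j : |ln ω_j|≤X} ω_j^{k_j(X)}`. -/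
theorem remainder_R2_bound (d : ℕ) (hd : 1 ≤ d) (ω : Fin d → ℝ)
    (hω : ∀ j, ω j ∈ Set.Ioo (0 : ℝ) 1) (X : ℝ) (hX : 0 < X) :
    ∑ j ∈ Finset.univ.filter (fun j : Fin d => |Real.log (ω j)| ≤ X),
        |Real.log (ω j)| ^ 2 * ω j ^ kmin (ω j) X / (1 - ω j) ^ 2
          * ((kmin (ω j) X : ℝ) ^ 2 * (1 - ω j) ^ 2 * (1 + ω j ^ kmin (ω j) X)
            + 2 * (kmin (ω j) X : ℝ) * (1 - ω j) * ω j ^ (kmin (ω j) X + 1)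
            + (1 - ω j) * ω j + ω j ^ (kmin (ω j) X + 2))
      ≤ (8 * X ^ 2 + 4 * X + 2) *
          ∑ j ∈ Finset.univ.filter (fun j : Fin d => |Real.log (ω j)| ≤ X),
            ω j ^ kmin (ω j) X := by
  rw [Finset.mul_sum]
  apply Finset.sum_le_sum
  intro j hj
  have hjX := (Finset.mem_filter.1 hj).2
  obtain ⟨h0, h1⟩ := hω j
  have hL : 0 < |Real.log (ω j)| := abs_pos.2 (Real.log_neg h0 h1).ne
  obtain ⟨b1, b2⟩ := log_bounds (ω j) h0 h1
  rw [pow_succ (ω j) (kmin (ω j) X), pow_add (ω j) (kmin (ω j) X) 2]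
  exact term_bound (ω j) _ X _ _ h0 h1 hL.le (Nat.cast_nonneg _) (by positivity)
    (pow_le_one₀ h0.le h1.le) (kmin_mul_le _ _ hjX hL) b1 b2
end

section
/- Let (σ_j)_{j≥1} be a sequence of positive real numbers with σ_j → σ as j → ∞ for some constant σ with 0 ≤ σ < ∞, let ω_j = ω(σ_j), and let n_d(ε) be the average case approximation complexity built from (ω_j). Define a_d = Σ_{j=1}^d ( |ln ω_j| ω_j/(1−ω_j) + |ln(1−ω_j)| ) and b_d = ρ√d, where ρ = |ln ω|√ω/(1−ω) with ω = ω(σ) if σ > 0, and ρ = 1 if σ = 0. Then for every ε ∈ (0,1), (ln n_d(ε) − a_d)/b_d → Φ⁻¹(1 − ε²) as d → ∞, where Φ is the cumulative distribution function of the standard Gaussian law and Φ⁻¹(p) = inf{x ∈ ℝ : Φ(x) ≥ p}. -/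
open Filter Set

/-- The cumulative distribution function `Φ` of the standard Gaussian law. -/
noncomputable def stdGaussianCDF (x : ℝ) : ℝ :=
  ProbabilityTheory.cdf (ProbabilityTheory.gaussianReal 0 1) x

/-- The quantile `Φ⁻¹(p) = inf{x : Φ(x) ≥ p}` of the standard Gaussian law. -/
noncomputable def stdGaussianQuantile (p : ℝ) : ℝ :=
  sInf {x : ℝ | p ≤ stdGaussianCDF x}

/-- `a_d = Σ_{j=1}^d ( |ln ω_j| ω_j/(1-ω_j) + |ln(1-ω_j)| )`. -/
noncomputable def aSeq (ω : ℕ → ℝ) (d : ℕ) : ℝ :=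
  ∑ j ∈ Finset.range d, (|Real.log (ω j)| * ω j / (1 - ω j) + |Real.log (1 - ω j)|)

open MeasureTheory ProbabilityTheory


lemma exp_I_taylor (x : ℝ) :
    ‖Complex.exp (x * Complex.I) - (1 + x * Complex.I - (x:ℂ)^2 / 2)‖ ≤ 4 * |x| ^ 3 := by
  rcases le_total |x| 1 with h | h
  · have h1 : ‖(x * Complex.I : ℂ)‖ ≤ 1 := by simpa using h
    have := Complex.exp_bound h1 (n := 3) (by norm_num)
    simp only [Finset.sum_range_succ, Finset.sum_range_zero, norm_mul, Complex.norm_real, Complex.norm_I, mul_one, Real.norm_eq_abs] at this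
    have e : (1 + x * Complex.I - (x:ℂ)^2 / 2) = 0 + (x * Complex.I) ^ 0 / (Nat.factorial 0 : ℂ) + (x * Complex.I) ^ 1 / (Nat.factorial 1 : ℂ) + (x * Complex.I) ^ 2 / (Nat.factorial 2 : ℂ) := by
      simp [mul_pow]; ring
    rw [e]
    refine this.trans ?_
    have : 0 ≤ |x|^3 := by positivity
    norm_num [Nat.factorial]
    linarith
  · have h1 : ‖Complex.exp (x * Complex.I)‖ = 1 := Complex.norm_exp_ofReal_mul_I x
    have h2 : ‖(1 + x * Complex.I - (x:ℂ)^2 / 2)‖ ≤ 1 + |x| + |x|^2/2 := by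
      refine (norm_sub_le _ _).trans ?_
      gcongr
      · refine (norm_add_le _ _).trans ?_
        simp
      · simp
    refine (norm_sub_le _ _).trans ?_
    rw [h1]
    have h3 : 1 ≤ |x|^2 := one_le_pow₀ h
    have h4 : |x|^2 ≤ |x|^3 := pow_le_pow_right₀ h (by norm_num)
    have h5 : |x|^1 ≤ |x|^3 := pow_le_pow_right₀ h (by norm_num)
    linarith

lemma exp_neg_taylor (y : ℝ) (hy : 0 ≤ y) : |Real.exp (-y) - (1 - y)| ≤ y ^ 2 := by
  rcases le_total y 1 with h | h
  · have := Real.abs_exp_sub_one_sub_id_le (x := -y) (by rwa [abs_neg, abs_of_nonneg hy])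
    rw [neg_sq] at this
    convert this using 2; ring
  · have h1 := Real.add_one_le_exp (-y)
    have h2 : Real.exp (-y) ≤ 1 := Real.exp_le_one_iff.2 (by linarith)
    rw [abs_of_nonneg (by linarith)]
    nlinarith

lemma norm_prod_sub_prod_le' {ι : Type*} (s : Finset ι) (a b : ι → ℂ) (ha : ∀ i, ‖a i‖ ≤ 1)
    (hb : ∀ i, ‖b i‖ ≤ 1) : ‖∏ i ∈ s, a i - ∏ i ∈ s, b i‖ ≤ ∑ i ∈ s, ‖a i - b i‖ := by
  classical
  induction s using Finset.induction_on with
  | empty => simp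
  | insert i s hi ih =>
    rw [Finset.prod_insert hi, Finset.prod_insert hi, Finset.sum_insert hi]
    have e : a i * ∏ j ∈ s, a j - b i * ∏ j ∈ s, b j =
      (a i - b i) * ∏ j ∈ s, a j + b i * (∏ j ∈ s, a j - ∏ j ∈ s, b j) := by ring
    rw [e]
    refine (norm_add_le _ _).trans ?_
    rw [norm_mul, norm_mul]
    have h1 : ‖∏ j ∈ s, a j‖ ≤ 1 := by
      rw [norm_prod]; exact Finset.prod_le_one (fun _ _ => norm_nonneg _) (fun j _ => ha j)
    have := mul_le_mul_of_nonneg_left h1 (norm_nonneg (a i - b i))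
    have := mul_le_mul_of_nonneg_right (hb i) (norm_nonneg (∏ j ∈ s, a j - ∏ j ∈ s, b j))
    linarith

lemma charfun_approx (μ : Measure ℕ) [IsProbabilityMeasure μ] (f : ℕ → ℝ) (v K : ℝ)
    (h1 : Integrable f μ) (h2 : Integrable (fun k => f k ^ 2) μ)
    (h3 : Integrable (fun k => |f k| ^ 3) μ)
    (m1 : ∫ k, f k ∂μ = 0) (m2 : ∫ k, f k ^ 2 ∂μ = v) (m3 : ∫ k, |f k| ^ 3 ∂μ ≤ K) (s : ℝ) :
    ‖∫ k, Complex.exp ((s * f k : ℝ) * Complex.I) ∂μ - (Real.exp (-(v * s ^ 2 / 2)) : ℂ)‖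
      ≤ 4 * K * |s| ^ 3 + v ^ 2 * s ^ 4 / 4 := by
  have hv : 0 ≤ v := by rw [← m2]; exact integral_nonneg fun _ => sq_nonneg _
  have i0 : Integrable (fun k => Complex.exp ((s * f k : ℝ) * Complex.I)) μ := by
    refine (integrable_const (1:ℝ)).mono' (by fun_prop) (ae_of_all _ fun k => ?_)
    rw [Complex.norm_exp_ofReal_mul_I]
  have i1 : Integrable (fun k => (1 + (s * f k : ℝ) * Complex.I - ((s * f k : ℝ):ℂ)^2 / 2)) μ := by
    refine ((integrable_const _).add ?_).sub ?_
    · exact ((h1.const_mul s).ofReal).mul_const _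
    · have := ((h2.const_mul (s^2)).ofReal (𝕜 := ℂ)).div_const 2
      refine this.congr (ae_of_all _ fun k => ?_)
      simp [mul_pow]
  have e1 : ∫ k, (1 + (s * f k : ℝ) * Complex.I - ((s * f k : ℝ):ℂ)^2 / 2) ∂μ
      = ((1 - v * s ^2 / 2 : ℝ) : ℂ) := by
    have : ∀ k, (1 + (s * f k : ℝ) * Complex.I - ((s * f k : ℝ):ℂ)^2 / 2)
        = ((1 - s^2 / 2 * f k ^2 : ℝ) : ℂ) + ((s * f k : ℝ) : ℂ) * Complex.I := by
      intro k; push_cast; ring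
    simp_rw [this]
    rw [integral_add, integral_mul_const, integral_complex_ofReal, integral_complex_ofReal, integral_const_mul, m1, integral_sub, integral_const_mul, m2]
    · simp; ring
    · exact integrable_const _
    · exact h2.const_mul _
    · exact ((integrable_const _).sub (h2.const_mul _)).ofReal
    · exact ((h1.const_mul s).ofReal).mul_const _
  have b1 : ‖∫ k, Complex.exp ((s * f k : ℝ) * Complex.I) ∂μ - ((1 - v * s ^2 / 2 : ℝ) : ℂ)‖
      ≤ 4 * K * |s|^3 := by
    rw [← e1, ← integral_sub i0 i1]
    calc _ ≤ ∫ k, 4 * |s|^3 * |f k|^3 ∂μ := by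
            refine norm_integral_le_of_norm_le (h3.const_mul _) (ae_of_all _ fun k => ?_)
            refine (exp_I_taylor _).trans (le_of_eq ?_)
            rw [abs_mul, mul_pow]; ring
      _ ≤ _ := by
            rw [integral_const_mul]
            nlinarith [show 0 ≤ |s|^3 by positivity]
  have b2 : ‖((1 - v * s ^2 / 2 : ℝ) : ℂ) - (Real.exp (-(v * s ^ 2 / 2)) : ℂ)‖ ≤ v ^ 2 * s ^ 4 / 4 := by
    rw [← Complex.ofReal_sub, Complex.norm_real, Real.norm_eq_abs, abs_sub_comm]
    refine (exp_neg_taylor _ (by positivity)).trans (le_of_eq ?_)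
    ring
  calc _ = ‖_ + _‖ := by rw [sub_add_sub_cancel]
    _ ≤ _ := norm_add_le_of_le b1 b2

lemma charfun_prod_tendsto (μ : ℕ → Measure ℕ) [∀ j, IsProbabilityMeasure (μ j)] (f : ℕ → ℕ → ℝ)
    (v : ℕ → ℝ) (K ρ : ℝ)
    (h1 : ∀ j, Integrable (f j) (μ j)) (h2 : ∀ j, Integrable (fun k => f j k ^ 2) (μ j))
    (h3 : ∀ j, Integrable (fun k => |f j k| ^ 3) (μ j))
    (m1 : ∀ j, ∫ k, f j k ∂(μ j) = 0) (m2 : ∀ j, ∫ k, f j k ^ 2 ∂(μ j) = v j)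
    (m3 : ∀ j, ∫ k, |f j k| ^ 3 ∂(μ j) ≤ K) (hρ : 0 < ρ) (hv : Tendsto v atTop (nhds (ρ ^ 2)))
    (t : ℝ) :
    Tendsto (fun d : ℕ => ∏ j ∈ Finset.range d,
      ∫ k, Complex.exp ((t / (ρ * √d) * f j k : ℝ) * Complex.I) ∂(μ j)) atTop
      (nhds (Complex.exp (-(t ^ 2 / 2)))) := by
  have v0 : ∀ j, 0 ≤ v j := fun j => by rw [← m2]; exact integral_nonneg fun _ => sq_nonneg _
  obtain ⟨V, hV⟩ := hv.bddAbove_range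
  have hV : ∀ j, v j ≤ V := fun j => hV ⟨j, rfl⟩
  have hV0 : 0 ≤ V := (v0 0).trans (hV 0)
  -- the Gaussian product
  have g : Tendsto (fun d : ℕ => ∏ j ∈ Finset.range d,
      (Real.exp (-(v j * (t / (ρ * √d)) ^ 2 / 2)) : ℂ)) atTop
      (nhds (Complex.exp (-(t ^ 2 / 2)))) := by
    have hc := hv.cesaro
    have hc2 : Tendsto (fun d : ℕ => Real.exp (-(t^2/(2*ρ^2) * ((d:ℝ)⁻¹ * ∑ i ∈ Finset.range d, v i)))) atTop (nhds (Real.exp (-(t^2/(2*ρ^2) * ρ^2)))) :=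
      (Real.continuous_exp.tendsto _).comp ((hc.const_mul _).neg)
    have e : t^2/(2*ρ^2) * ρ^2 = t^2/2 := by field_simp
    rw [e] at hc2
    have := (Complex.continuous_ofReal.tendsto _).comp hc2
    have e2 : ((Real.exp (-(t^2/2)) : ℝ) : ℂ) = Complex.exp (-(t ^ 2 / 2)) := by push_cast; rfl
    rw [e2] at this
    refine this.congr' ?_
    filter_upwards [eventually_gt_atTop 0] with d hd
    simp only [Function.comp]
    rw [← Complex.ofReal_prod, ← Real.exp_sum]
    congr 2
    have hd' : (0:ℝ) < d := by exact_mod_cast hd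
    rw [div_pow, mul_pow, Real.sq_sqrt hd'.le, Finset.sum_neg_distrib, ← Finset.sum_div,
      ← Finset.sum_mul]
    field_simp
  have key : Tendsto (fun d : ℕ => ∏ j ∈ Finset.range d,
      ∫ k, Complex.exp ((t / (ρ * √d) * f j k : ℝ) * Complex.I) ∂(μ j) - ∏ j ∈ Finset.range d,
      (Real.exp (-(v j * (t / (ρ * √d)) ^ 2 / 2)) : ℂ)) atTop (nhds 0) := by
    have hb : ∀ᶠ d : ℕ in atTop, ‖∏ j ∈ Finset.range d,
      ∫ k, Complex.exp ((t / (ρ * √d) * f j k : ℝ) * Complex.I) ∂(μ j) - ∏ j ∈ Finset.range d,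
      (Real.exp (-(v j * (t / (ρ * √d)) ^ 2 / 2)) : ℂ)‖ ≤
        (4 * K * |t/ρ|^3) * (√d)⁻¹ + (V^2 * (t/ρ)^4/4) * (d:ℝ)⁻¹ := by
      filter_upwards [eventually_gt_atTop 0] with d hd
      have hd' : (0:ℝ) < d := by exact_mod_cast hd
      refine (norm_prod_sub_prod_le' _ _ _ ?_ ?_).trans ?_
      · intro j
        refine (norm_integral_le_of_norm_le (integrable_const (1:ℝ)) (ae_of_all _ fun k => ?_)).trans ?_
        · rw [Complex.norm_exp_ofReal_mul_I]
        · simp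
      · intro j
        rw [Complex.norm_real, Real.norm_eq_abs, Real.abs_exp, Real.exp_le_one_iff]
        have := v0 j
        have : 0 ≤ v j * (t / (ρ * √d)) ^ 2 / 2 := by positivity
        linarith
      · refine (Finset.sum_le_card_nsmul _ _ (4 * K * |t / (ρ * √d)| ^ 3 + V ^ 2 * (t / (ρ * √d)) ^ 4 / 4) ?_).trans (le_of_eq ?_)
        · intro j _
          refine (charfun_approx (μ j) (f j) (v j) K (h1 j) (h2 j) (h3 j) (m1 j) (m2 j) (m3 j) _).trans ?_
          have := v0 j
          have := hV j
          gcongr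
        · simp only [Finset.card_range, nsmul_eq_mul]
          have hs : 0 < √(d:ℝ) := Real.sqrt_pos.2 hd'
          obtain ⟨s, hs', hsd⟩ : ∃ s : ℝ, 0 < s ∧ (d:ℝ) = s^2 := ⟨√d, hs, (Real.sq_sqrt hd'.le).symm⟩
          rw [hsd, Real.sqrt_sq hs'.le, abs_div, abs_div, abs_mul, abs_of_pos hs']
          have : 0 < |ρ| := abs_pos.2 hρ.ne'
          field_simp
    refine squeeze_zero_norm' hb ?_
    have a1 : Tendsto (fun d : ℕ => (√(d:ℝ))⁻¹) atTop (nhds 0) :=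
      tendsto_inv_atTop_zero.comp (Real.tendsto_sqrt_atTop.comp tendsto_natCast_atTop_atTop)
    have a2 : Tendsto (fun d : ℕ => ((d:ℝ))⁻¹) atTop (nhds 0) :=
      tendsto_inv_atTop_zero.comp tendsto_natCast_atTop_atTop
    simpa using (a1.const_mul (4 * K * |t/ρ|^3)).add (a2.const_mul (V^2 * (t/ρ)^4/4))
  simpa using key.add g


lemma clt_geom (μ : ℕ → Measure ℕ) [∀ j, IsProbabilityMeasure (μ j)] (f : ℕ → ℕ → ℝ)
    (v : ℕ → ℝ) (K ρ : ℝ)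
    (h1 : ∀ j, Integrable (f j) (μ j)) (h2 : ∀ j, Integrable (fun k => f j k ^ 2) (μ j))
    (h3 : ∀ j, Integrable (fun k => |f j k| ^ 3) (μ j))
    (m1 : ∀ j, ∫ k, f j k ∂(μ j) = 0) (m2 : ∀ j, ∫ k, f j k ^ 2 ∂(μ j) = v j)
    (m3 : ∀ j, ∫ k, |f j k| ^ 3 ∂(μ j) ≤ K) (hρ : 0 < ρ) (hv : Tendsto v atTop (nhds (ρ ^ 2)))
    (x : ℝ) :
    Tendsto (fun d : ℕ => (Measure.pi (fun j : Fin d => μ j)).real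
      {k | (∑ j : Fin d, f j (k j)) ≤ x * (ρ * √d)}) atTop (nhds (stdGaussianCDF x)) := by
  let X : (d : ℕ) → (Fin d → ℕ) → ℝ := fun d k => (∑ j : Fin d, f j (k j)) / (ρ * √d)
  have hX : ∀ d, Measurable (X d) := fun d => measurable_of_countable _
  have hP : ∀ d, IsProbabilityMeasure ((Measure.pi (fun j : Fin d => μ j)).map (X d)) :=
    fun d => Measure.isProbabilityMeasure_map (hX d).aemeasurable
  let P : ℕ → ProbabilityMeasure ℝ := fun d => ⟨(Measure.pi (fun j : Fin d => μ j)).map (X d), hP d⟩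
  let G : ProbabilityMeasure ℝ := ⟨gaussianReal 0 1, inferInstance⟩
  have hw : Tendsto P atTop (nhds G) := by
    refine ProbabilityMeasure.tendsto_iff_tendsto_charFun.2 fun t => ?_
    have := charfun_prod_tendsto μ f v K ρ h1 h2 h3 m1 m2 m3 hρ hv t
    have e : charFun (G : Measure ℝ) t = Complex.exp (-(t ^ 2 / 2)) := by
      change charFun (gaussianReal 0 1) t = _
      rw [charFun_gaussianReal]; simp
    rw [e]
    refine this.congr fun d => ?_
    change _ = charFun ((Measure.pi (fun j : Fin d => μ j)).map (X d)) t
    rw [charFun_apply_real, integral_map (hX d).aemeasurable (by fun_prop)]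
    rw [Finset.prod_range (fun j => ∫ k, Complex.exp ((t / (ρ * √d) * f j k : ℝ) * Complex.I) ∂(μ j)),
      ← integral_fintype_prod_eq_prod (fun (j : Fin d) k => Complex.exp ((t / (ρ * √d) * f j k : ℝ) * Complex.I))]
    congr 1
    ext k
    rw [← Complex.exp_sum]
    congr 1
    simp only [X]
    push_cast
    rw [← Finset.sum_mul, ← Finset.mul_sum]
    ring
  have h := ProbabilityMeasure.tendsto_measure_of_null_frontier_of_tendsto' hw (E := Iic x) (by
    rw [frontier_Iic]
    change gaussianReal 0 1 {x} = 0
    have := nullSingletonClass_gaussianReal (μ := 0) (v := 1) (by norm_num)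
    exact measure_singleton x)
  have h' := (ENNReal.tendsto_toReal (measure_ne_top _ _)).comp h
  have e : stdGaussianCDF x = ((G : Measure ℝ) (Iic x)).toReal := by
    rw [stdGaussianCDF, cdf_eq_real]; rfl
  rw [e]
  refine h'.congr' ?_
  filter_upwards [eventually_gt_atTop 0] with d hd
  have hd' : (0:ℝ) < d := by exact_mod_cast hd
  have hp : 0 < ρ * √d := mul_pos hρ (Real.sqrt_pos.2 hd')
  change ((Measure.pi (fun j : Fin d => μ j)).map (X d) (Iic x)).toReal = _
  rw [Measure.map_apply (hX d) measurableSet_Iic, measureReal_def]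
  congr 2
  ext k
  simp [X, div_le_iff₀ hp]

lemma stdGaussianCDF_strictMono : StrictMono stdGaussianCDF := by
  intro a b hab
  simp only [stdGaussianCDF]
  rw [cdf_eq_real, cdf_eq_real]
  have : 0 < (gaussianReal 0 1) (Ioo a b) := by
    have hac : (volume : Measure ℝ) ≪ gaussianReal 0 1 := gaussianReal_absolutelyContinuous' 0 (by norm_num)
    rw [pos_iff_ne_zero]
    intro h
    have := hac h
    simp at this; linarith
  have h2 : 0 < (gaussianReal 0 1).real (Ioo a b) := ENNReal.toReal_pos this.ne' (measure_ne_top _ _)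
  have h3 : (gaussianReal 0 1).real (Iic a ∪ Ioo a b) = (gaussianReal 0 1).real (Iic a) + (gaussianReal 0 1).real (Ioo a b) := by
    apply measureReal_union _ measurableSet_Ioo
    rw [Set.disjoint_left]; rintro y hy ⟨h1, h2⟩; exact absurd hy (not_le.2 h1)
  have h4 : (gaussianReal 0 1).real (Iic a ∪ Ioo a b) ≤ (gaussianReal 0 1).real (Iic b) := by
    refine measureReal_mono ?_
    rintro y (hy | hy)
    · exact le_trans hy hab.le
    · exact hy.2.le
  linarith

lemma quantile_spec (p : ℝ) (h0 : 0 < p) (h1 : p < 1) (δ : ℝ) (hδ : 0 < δ) :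
    stdGaussianCDF (stdGaussianQuantile p - δ) < p ∧ p < stdGaussianCDF (stdGaussianQuantile p + δ) := by
  have hbot : Tendsto stdGaussianCDF atBot (nhds 0) := tendsto_cdf_atBot _
  have htop : Tendsto stdGaussianCDF atTop (nhds 1) := tendsto_cdf_atTop _
  have hne : {x : ℝ | p ≤ stdGaussianCDF x}.Nonempty := by
    obtain ⟨x, hx⟩ := (htop.eventually (lt_mem_nhds h1)).exists
    exact ⟨x, hx.le⟩
  have hbd : BddBelow {x : ℝ | p ≤ stdGaussianCDF x} := by
    obtain ⟨x, hx⟩ := (hbot.eventually (gt_mem_nhds h0)).exists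
    refine ⟨x, fun y hy => ?_⟩
    exact (stdGaussianCDF_strictMono.lt_iff_lt.1 (hx.trans_le hy)).le
  constructor
  · by_contra! h
    have : stdGaussianQuantile p ≤ _ := csInf_le hbd h
    linarith
  · obtain ⟨x, hx, hlt⟩ := exists_lt_of_csInf_lt hne (show sInf _ < stdGaussianQuantile p + δ by
      rw [stdGaussianQuantile]; linarith)
    exact lt_of_le_of_lt hx (stdGaussianCDF_strictMono hlt)

lemma geom_moments (p : unitInterval) (w L : ℝ) (hw0 : 0 < w) (hw1 : w < 1)
    (hp : (p : ℝ) = 1 - w) (hL : 0 ≤ L) :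
    Integrable (fun n : ℕ => L * (n - w / (1 - w))) (geometricMeasure p) ∧
    Integrable (fun n : ℕ => (L * (n - w / (1 - w))) ^ 2) (geometricMeasure p) ∧
    Integrable (fun n : ℕ => |L * (n - w / (1 - w))| ^ 3) (geometricMeasure p) ∧
    ∫ n : ℕ, L * (n - w / (1 - w)) ∂(geometricMeasure p) = 0 ∧
    ∫ n : ℕ, (L * (n - w / (1 - w))) ^ 2 ∂(geometricMeasure p) = L ^ 2 * w / (1 - w) ^ 2 ∧
    ∫ n : ℕ, |L * (n - w / (1 - w))| ^ 3 ∂(geometricMeasure p) ≤ 7 * (L / (1 - w)) ^ 3 := by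
  have hp0 : p ≠ 0 := by
    intro h; rw [h] at hp; simp at hp; linarith
  have hw' : 0 < 1 - w := by linarith
  have hn : ‖w‖ < 1 := by rw [Real.norm_eq_abs, abs_of_pos hw0]; exact hw1
  have hpw : (1 - (p:ℝ)) = w := by rw [hp]; ring
  have S0 := hasSum_choose_mul_geometric_of_norm_lt_one 0 hn
  have S1 := hasSum_choose_mul_geometric_of_norm_lt_one 1 hn
  have S2 := hasSum_choose_mul_geometric_of_norm_lt_one 2 hn
  have S3 := hasSum_choose_mul_geometric_of_norm_lt_one 3 hn
  have c1 : ∀ n : ℕ, (((n+1).choose 1 : ℕ) : ℝ) = n + 1 := by intro n; simp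
  have c2 : ∀ n : ℕ, (((n+2).choose 2 : ℕ) : ℝ) = (n + 1) * (n + 2) / 2 := by
    intro n; rw [Nat.cast_choose_two]; push_cast; ring
  have c3 : ∀ n : ℕ, (n:ℝ) ^ 3 ≤ 6 * (((n+3).choose 3 : ℕ) : ℝ) := by
    intro n
    have h := Nat.descFactorial_eq_factorial_mul_choose (n+3) 3
    have h2 : (n+3).descFactorial 3 = (n+1)*(n+2)*(n+3) := by
      simp [Nat.descFactorial]; ring
    rw [h2] at h
    have h3 : ((n:ℝ)+1)*(n+2)*(n+3) = 6 * (((n+3).choose 3 : ℕ) : ℝ) := by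
      have := congrArg (fun x : ℕ => (x:ℝ)) h
      simpa [Nat.factorial] using this
    rw [← h3]
    have : (0:ℝ) ≤ n := Nat.cast_nonneg n
    nlinarith [mul_nonneg this this]
  simp_rw [c1] at S1
  simp_rw [c2] at S2
  simp only [Nat.choose_zero_right, Nat.cast_one, one_mul] at S0
  set m := w / (1 - w) with hm
  have hm0 : 0 ≤ m := by positivity
  have E1 : HasSum (fun n : ℕ => w ^ n * (1 - w) * (L * (n - m))) 0 := by
    have := (S1.sub (S0.mul_left (1 + m))).mul_left (L * (1 - w))
    convert! this using 1
    · ext n; ring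
    · rw [hm]; field_simp; ring
  have E2 : HasSum (fun n : ℕ => w ^ n * (1 - w) * (L * (n - m)) ^ 2) (L ^ 2 * w / (1 - w) ^ 2) := by
    have := (((S2.mul_left 2).sub (S1.mul_left (3 + 2 * m))).add (S0.mul_left (1 + 2 * m + m ^ 2))).mul_left (L ^ 2 * (1 - w))
    convert! this using 1
    · ext n; ring
    · rw [hm]; field_simp; ring
  have E3 : HasSum (fun n : ℕ => w ^ n * (1 - w) * (L ^ 3 * (6 * ((n+3).choose 3 : ℕ) + m ^ 3)))
      (L ^ 3 * (6 / (1 - w) ^ 3 + m ^ 3)) := by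
    have := ((S3.mul_left 6).add (S0.mul_left (m ^ 3))).mul_left (L ^ 3 * (1 - w))
    convert! this using 1
    · ext n; ring
    · field_simp; ring
  have B3 : ∀ n : ℕ, |L * (n - m)| ^ 3 ≤ L ^ 3 * (6 * ((n+3).choose 3 : ℕ) + m ^ 3) := by
    intro n
    rw [abs_mul, abs_of_nonneg hL, mul_pow]
    gcongr
    have hn0 : (0:ℝ) ≤ n := Nat.cast_nonneg n
    have hc := c3 n
    rcases le_total (n:ℝ) m with h | h
    · have : |(n:ℝ) - m| ≤ m := by rw [abs_sub_comm, abs_of_nonneg (by linarith)]; linarith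
      have : |(n:ℝ) - m| ^ 3 ≤ m ^ 3 := by gcongr
      have : (0:ℝ) ≤ n^3 := by positivity
      linarith
    · have : |(n:ℝ) - m| ≤ n := by rw [abs_of_nonneg (by linarith)]; linarith
      have : |(n:ℝ) - m| ^ 3 ≤ n ^ 3 := by gcongr
      have : (0:ℝ) ≤ m^3 := by positivity
      linarith
  have hwn : ∀ n : ℕ, 0 ≤ w ^ n * (1 - w) := fun n => by positivity
  have Sm3 : Summable (fun n : ℕ => w ^ n * (1 - w) * |L * (n - m)| ^ 3) :=
    Summable.of_nonneg_of_le (fun n => mul_nonneg (hwn n) (by positivity))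
      (fun n => mul_le_mul_of_nonneg_left (B3 n) (hwn n)) E3.summable
  have I3 : Integrable (fun n : ℕ => |L * (n - m)| ^ 3) (geometricMeasure p) := by
    rw [integrable_geometricMeasure_iff hp0, hpw, hp]
    simpa using Sm3
  have I2 : Integrable (fun n : ℕ => (L * (n - m)) ^ 2) (geometricMeasure p) := by
    rw [integrable_geometricMeasure_iff hp0, hpw, hp]
    simpa only [norm_pow, Real.norm_eq_abs, sq_abs] using E2.summable
  have I1 : Integrable (fun n : ℕ => L * (n - m)) (geometricMeasure p) := by
    refine ((integrable_const (1:ℝ)).add I2).mono' (measurable_of_countable _).aestronglyMeasurable (ae_of_all _ fun n => ?_)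
    simp only [Pi.add_apply, Real.norm_eq_abs]
    rw [← sq_abs (L * (n - m))]
    nlinarith [sq_nonneg (|L * (n - m)| - 1), abs_nonneg (L * (n - m))]
  refine ⟨I1, I2, I3, ?_, ?_, ?_⟩
  · rw [integral_geometricMeasure hp0, hpw, hp]
    simp only [smul_eq_mul]
    exact E1.tsum_eq
  · rw [integral_geometricMeasure hp0, hpw, hp]
    simp only [smul_eq_mul]
    exact E2.tsum_eq
  · rw [integral_geometricMeasure hp0, hpw, hp]
    simp only [smul_eq_mul]
    refine (Summable.tsum_le_tsum (fun n => mul_le_mul_of_nonneg_left (B3 n) (hwn n)) Sm3 E3.summable).trans ?_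
    rw [E3.tsum_eq, div_pow L]
    have : m ^ 3 ≤ 1 / (1 - w) ^ 3 := by
      rw [hm, div_pow]; gcongr; exact pow_le_one₀ hw0.le hw1.le
    have hL3 : 0 ≤ L ^ 3 := by positivity
    calc L ^ 3 * (6 / (1 - w) ^ 3 + m ^ 3) ≤ L ^ 3 * (6 / (1 - w) ^ 3 + 1 / (1 - w) ^ 3) := by gcongr
      _ = _ := by ring

lemma tsum_compl_real {Ω : Type*} [MeasurableSpace Ω] [Countable Ω] [MeasurableSingletonClass Ω]
    (P : Measure Ω) [IsProbabilityMeasure P] (S : Finset Ω) :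
    ∑' k : {k : Ω // k ∉ S}, P.real {k.1} = 1 - P.real S := by
  have h := P.tsum_indicator_apply_singleton univ MeasurableSet.univ
  simp only [indicator_univ, measure_univ] at h
  have hs : Summable (fun k => P.real {k}) := ENNReal.summable_toReal (by rw [h]; simp)
  have h1 : ∑' k, P.real {k} = 1 := by
    have := ENNReal.tsum_toReal_eq (f := fun k => P {k}) (fun a => measure_ne_top _ _)
    rw [h] at this
    simpa [measureReal_def] using this.symm
  have := hs.sum_add_tsum_subtype_compl S
  rw [h1, sum_measureReal_singleton] at this
  linarith

lemma finite_large {Ω : Type*} [MeasurableSpace Ω] [Countable Ω] [MeasurableSingletonClass Ω]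
    (P : Measure Ω) [IsProbabilityMeasure P] (t : ℝ) :
    ∃ S : Finset Ω, (S : Set Ω) = {k | Real.exp (-t) ≤ P.real {k}} ∧ (S.card : ℝ) ≤ Real.exp t := by
  have h := P.tsum_indicator_apply_singleton univ MeasurableSet.univ
  simp only [indicator_univ, measure_univ] at h
  have hs : Summable (fun k => P.real {k}) := ENNReal.summable_toReal (by rw [h]; simp)
  have hf : {k | Real.exp (-t) ≤ P.real {k}}.Finite := by
    have := hs.tendsto_cofinite_zero.eventually (gt_mem_nhds (Real.exp_pos (-t)))
    rw [eventually_cofinite] at this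
    simpa using this
  refine ⟨hf.toFinset, by simp, ?_⟩
  have h1 : P.real (hf.toFinset : Set Ω) ≤ 1 := measureReal_le_one
  rw [← sum_measureReal_singleton] at h1
  have h2 := Finset.card_nsmul_le_sum hf.toFinset (fun k => P.real {k}) (Real.exp (-t)) (by simp)
  rw [nsmul_eq_mul] at h2
  have h3 := h2.trans h1
  generalize (hf.toFinset.card : ℝ) = z at h3
  rwa [Real.exp_neg, ← div_eq_mul_inv, div_le_one (Real.exp_pos t)] at h3

lemma upper_set {Ω : Type*} [MeasurableSpace Ω] [Countable Ω] [MeasurableSingletonClass Ω]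
    (P : Measure Ω) [IsProbabilityMeasure P] (t e : ℝ) (he : e < 1)
    (h : 1 - e ≤ P.real {k | Real.exp (-t) ≤ P.real {k}}) :
    ∃ n : ℕ, (1 ≤ n ∧ ∃ S : Finset Ω, S.card ≤ n ∧ ∑' k : {k : Ω // k ∉ S}, P.real {k.1} ≤ e) ∧
      (n : ℝ) ≤ Real.exp t := by
  obtain ⟨S, hS, hc⟩ := finite_large P t
  refine ⟨S.card, ⟨?_, S, le_rfl, ?_⟩, hc⟩
  · rw [Nat.one_le_iff_ne_zero]
    intro h0
    rw [Finset.card_eq_zero] at h0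
    rw [← hS, h0] at h
    simp at h; linarith
  · rw [tsum_compl_real, hS]; linarith

lemma lower_set {Ω : Type*} [MeasurableSpace Ω] [Countable Ω] [MeasurableSingletonClass Ω]
    (P : Measure Ω) [IsProbabilityMeasure P] (t e : ℝ) (n : ℕ)
    (h : ∃ S : Finset Ω, S.card ≤ n ∧ ∑' k : {k : Ω // k ∉ S}, P.real {k.1} ≤ e) :
    1 - e ≤ P.real {k | Real.exp (-t) ≤ P.real {k}} + n * Real.exp (-t) := by
  classical
  obtain ⟨S, hc, hS⟩ := h
  rw [tsum_compl_real] at hS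
  obtain ⟨A, hA, -⟩ := finite_large P t
  rw [← hA]
  have h1 : P.real S ≤ P.real A + P.real (S \ A : Finset Ω) := by
    refine le_trans (measureReal_mono ?_) (measureReal_union_le _ _)
    intro x hx
    by_cases hxA : x ∈ A
    · exact Or.inl hxA
    · right; simpa [hxA] using hx
  have h2 : P.real (S \ A : Finset Ω) ≤ n * Real.exp (-t) := by
    rw [← sum_measureReal_singleton]
    refine (Finset.sum_le_card_nsmul _ _ (Real.exp (-t)) ?_).trans ?_
    · intro x hx
      have hxA : x ∉ (A : Set Ω) := by simpa using (Finset.mem_sdiff.1 hx).2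
      rw [hA] at hxA
      exact (not_le.1 hxA).le
    · rw [nsmul_eq_mul]
      gcongr
      exact (Finset.card_le_card Finset.sdiff_subset).trans hc
  linarith

/-- success probability `1 - w` as an element of the unit interval -/
noncomputable def succProb (w : ℝ) : unitInterval := Set.projIcc 0 1 zero_le_one (1 - w)

lemma succProb_coe (w : ℝ) (h0 : 0 < w) (h1 : w < 1) : (succProb w : ℝ) = 1 - w := by
  rw [succProb, Set.projIcc_of_mem zero_le_one (⟨by linarith, by linarith⟩ : (1 - w) ∈ Icc (0:ℝ) 1)]

/-- product of geometric laws -/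
noncomputable def prodGeom (ω : ℕ → ℝ) (d : ℕ) : Measure (Fin d → ℕ) :=
  Measure.pi (fun j : Fin d => geometricMeasure (succProb (ω j)))

instance (ω : ℕ → ℝ) (d : ℕ) : IsProbabilityMeasure (prodGeom ω d) := by
  unfold prodGeom; infer_instance

lemma prodGeom_singleton (ω : ℕ → ℝ) (h0 : ∀ j, 0 < ω j) (h1 : ∀ j, ω j < 1) (d : ℕ)
    (k : Fin d → ℕ) : (prodGeom ω d).real {k} = ∏ j : Fin d, (1 - ω j.1) * ω j.1 ^ k j := by
  rw [measureReal_def, prodGeom, ← Set.univ_pi_singleton, Measure.pi_pi, ENNReal.toReal_prod]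
  refine Finset.prod_congr rfl fun j _ => ?_
  have hc := succProb_coe (ω j) (h0 j) (h1 j)
  have := geometricMeasure_real_singleton (p := succProb (ω j)) (by
    intro h; rw [h] at hc; simp at hc; linarith [h1 j]) (k j)
  rw [measureReal_def] at this
  rw [this, hc]; ring

lemma prodGeom_large (ω : ℕ → ℝ) (h0 : ∀ j, 0 < ω j) (h1 : ∀ j, ω j < 1) (d : ℕ) (y : ℝ) :
    {k | Real.exp (-(aSeq ω d + y)) ≤ (prodGeom ω d).real {k}} =
    {k : Fin d → ℕ | ∑ j : Fin d, -Real.log (ω j) * (k j - ω j / (1 - ω j)) ≤ y} := by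
  ext k
  simp only [mem_ofPred_eq]
  have e : (prodGeom ω d).real {k} =
      Real.exp (-(aSeq ω d + ∑ j : Fin d, -Real.log (ω j) * (k j - ω j / (1 - ω j)))) := by
    rw [prodGeom_singleton ω h0 h1, aSeq, Finset.sum_range, ← Finset.sum_add_distrib, ← Finset.sum_neg_distrib, Real.exp_sum]
    refine Finset.prod_congr rfl fun j _ => ?_
    have a := h0 j
    have b := h1 j
    rw [abs_of_neg (Real.log_neg a b), abs_of_neg (Real.log_neg (x := 1 - ω j) (by linarith) (by linarith))]
    have : -(-Real.log (ω ↑j) * ω ↑j / (1 - ω ↑j) + -Real.log (1 - ω ↑j) + -Real.log (ω ↑j) * (↑(k j) - ω ↑j / (1 - ω ↑j)))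
      = Real.log (1 - ω j) + k j * Real.log (ω j) := by ring
    rw [this, Real.exp_add, Real.exp_log (by linarith), Real.exp_nat_mul, Real.exp_log a]
  rw [e, Real.exp_le_exp]
  constructor <;> intro h <;> linarith

lemma main_general (ω : ℕ → ℝ) (h0 : ∀ j, 0 < ω j) (h1 : ∀ j, ω j < 1) (c : ℝ) (hc : 0 < c)
    (hcω : ∀ j, c ≤ ω j) (ρ : ℝ) (hρ : 0 < ρ)
    (hv : Tendsto (fun j => (-Real.log (ω j)) ^ 2 * ω j / (1 - ω j) ^ 2) atTop (nhds (ρ ^ 2)))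
    (ε : ℝ) (hε : ε ∈ Ioo (0:ℝ) 1) :
    Tendsto (fun d : ℕ => (Real.log (avgComplexity ω d ε) - aSeq ω d) / (ρ * √d)) atTop
      (nhds (stdGaussianQuantile (1 - ε ^ 2))) := by
  have hL : ∀ j, 0 ≤ -Real.log (ω j) := fun j => by linarith [Real.log_neg (h0 j) (h1 j)]
  have hLb : ∀ j, -Real.log (ω j) / (1 - ω j) ≤ 1 / c := by
    intro j
    have a := h0 j
    have b : 0 < 1 - ω j := by linarith [h1 j]
    rw [div_le_iff₀ b]
    have := Real.one_sub_inv_le_log_of_pos a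
    have h2 : (ω j)⁻¹ - 1 = 1 / ω j * (1 - ω j) := by field_simp
    have h3 : 1 / ω j ≤ 1 / c := one_div_le_one_div_of_le hc (hcω j)
    nlinarith
  have M := fun j => geom_moments (succProb (ω j)) (ω j) (-Real.log (ω j)) (h0 j) (h1 j)
    (succProb_coe _ (h0 j) (h1 j)) (hL j)
  have clt := clt_geom (fun j => geometricMeasure (succProb (ω j)))
    (fun j k => -Real.log (ω j) * (k - ω j / (1 - ω j))) _ (7 * (1 / c) ^ 3) ρ
    (fun j => (M j).1) (fun j => (M j).2.1) (fun j => (M j).2.2.1) (fun j => (M j).2.2.2.1)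
    (fun j => (M j).2.2.2.2.1) (fun j => (M j).2.2.2.2.2.trans (by
      have : 0 ≤ -Real.log (ω j) / (1 - ω j) := div_nonneg (hL j) (by linarith [h1 j])
      have := hLb j
      gcongr)) hρ hv
  have clt' : ∀ x : ℝ, Tendsto (fun d : ℕ => (prodGeom ω d).real
      {k | Real.exp (-(aSeq ω d + x * (ρ * √d))) ≤ (prodGeom ω d).real {k}}) atTop
      (nhds (stdGaussianCDF x)) := by
    intro x
    simp_rw [prodGeom_large ω h0 h1]
    exact clt x
  have hdef : ∀ d, avgComplexity ω d ε = sInf {n : ℕ | 1 ≤ n ∧ ∃ S : Finset (Fin d → ℕ), S.card ≤ n ∧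
    ∑' k : {k : Fin d → ℕ // k ∉ S}, (prodGeom ω d).real {k.1} ≤ ε ^ 2} := by
    intro d
    simp_rw [avgComplexity, prodGeom_singleton ω h0 h1]
  have he0 : 0 < ε ^ 2 := by have := hε.1; positivity
  have he1 : ε ^ 2 < 1 := by have := hε.1; have := hε.2; nlinarith
  set q := stdGaussianQuantile (1 - ε ^ 2) with hq
  have Q := quantile_spec (1 - ε ^ 2) (by linarith) (by linarith)
  have up : ∀ δ > 0, ∀ᶠ d : ℕ in atTop, (1 ≤ avgComplexity ω d ε ∧ ∃ S : Finset (Fin d → ℕ), S.card ≤ avgComplexity ω d ε ∧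
    ∑' k : {k : Fin d → ℕ // k ∉ S}, (prodGeom ω d).real {k.1} ≤ ε ^ 2) ∧
      Real.log (avgComplexity ω d ε) ≤ aSeq ω d + (q + δ) * (ρ * √d) := by
    intro δ hδ
    filter_upwards [(clt' (q + δ)).eventually (lt_mem_nhds (Q δ hδ).2)] with d hd
    obtain ⟨n, hn, hle⟩ := upper_set (prodGeom ω d) _ (ε ^ 2) he1 hd.le
    have hmem := Nat.sInf_mem (s := {n : ℕ | 1 ≤ n ∧ ∃ S : Finset (Fin d → ℕ), S.card ≤ n ∧
      ∑' k : {k : Fin d → ℕ // k ∉ S}, (prodGeom ω d).real {k.1} ≤ ε ^ 2}) ⟨n, hn⟩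
    have hmin := Nat.sInf_le (s := {n : ℕ | 1 ≤ n ∧ ∃ S : Finset (Fin d → ℕ), S.card ≤ n ∧
      ∑' k : {k : Fin d → ℕ // k ∉ S}, (prodGeom ω d).real {k.1} ≤ ε ^ 2}) hn
    rw [← hdef d] at hmem hmin
    refine ⟨hmem, ?_⟩
    have h1' : 1 ≤ avgComplexity ω d ε := hmem.1
    rw [Real.log_le_iff_le_exp (by exact_mod_cast h1')]
    exact le_trans (by exact_mod_cast hmin) hle
  have low : ∀ δ > 0, ∃ C : ℝ, ∀ᶠ d : ℕ in atTop,
      aSeq ω d + (q - δ) * (ρ * √d) + C ≤ Real.log (avgComplexity ω d ε) := by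
    intro δ hδ
    have hgap := (Q δ hδ).1
    obtain ⟨r, hr1, hr2⟩ := exists_between hgap
    refine ⟨Real.log (1 - ε ^ 2 - r), ?_⟩
    filter_upwards [(clt' (q - δ)).eventually (gt_mem_nhds hr1), up 1 one_pos] with d hd hu
    have := lower_set (prodGeom ω d) (aSeq ω d + (q - δ) * (ρ * √d)) (ε ^ 2) _ hu.1.2
    have hN : (0:ℝ) < avgComplexity ω d ε := by exact_mod_cast hu.1.1
    have h4 : 1 - ε ^ 2 - r ≤ avgComplexity ω d ε * Real.exp (-(aSeq ω d + (q - δ) * (ρ * √d))) := by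
      linarith
    have h5 := Real.log_le_log (by linarith) h4
    rw [Real.log_mul hN.ne' (Real.exp_pos _).ne', Real.log_exp] at h5
    linarith
  have hb : Tendsto (fun d : ℕ => ρ * √(d:ℝ)) atTop atTop :=
    (Real.tendsto_sqrt_atTop.comp tendsto_natCast_atTop_atTop).const_mul_atTop hρ
  rw [tendsto_order]
  constructor
  · intro a ha
    obtain ⟨C, hC⟩ := low ((q - a) / 2) (by linarith)
    have hz : Tendsto (fun d : ℕ => C / (ρ * √(d:ℝ))) atTop (nhds 0) := hb.const_div_atTop C
    filter_upwards [hC, hb.eventually_gt_atTop 0, hz.eventually (lt_mem_nhds (show -((q - a)/2) < 0 by linarith))] with d h1 h2 h3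
    rw [lt_div_iff₀ h2]
    rw [lt_div_iff₀ h2] at h3
    nlinarith
  · intro a ha
    filter_upwards [up ((a - q) / 2) (by linarith), hb.eventually_gt_atTop 0] with d h1 h2
    rw [div_lt_iff₀ h2]
    nlinarith [h1.2]

/-- a form of `omegaFn` that is continuous on `[0,∞)` -/
lemma omegaFn_eq (s : ℝ) (hs : 0 ≤ s) :
    omegaFn s = (1 + (s ^ 2 + s * √(s ^ 2 + 4)) / 2)⁻¹ := by
  rcases hs.eq_or_lt with rfl | h
  · simp [omegaFn]
  · rw [omegaFn]
    have : s ^ 2 + 4 = s ^ 2 * (1 + 4 / s ^ 2) := by field_simp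
    rw [this, Real.sqrt_mul (by positivity), Real.sqrt_sq hs]
    congr 1; ring

lemma omegaFn_pos (s : ℝ) (hs : 0 ≤ s) : 0 < omegaFn s := by
  rw [omegaFn_eq s hs]; positivity

lemma omegaFn_lt_one (s : ℝ) (hs : 0 < s) : omegaFn s < 1 := by
  rw [omegaFn_eq s hs.le]
  apply inv_lt_one_of_one_lt₀
  have : 0 < (s ^ 2 + s * √(s ^ 2 + 4)) / 2 := by positivity
  linarith

/-- If `σ_j → σ ∈ [0,∞)`, then `ln n_d(ε) = a_d + Φ⁻¹(1-ε²) b_d + o(b_d)` with `b_d = ρ √d`. -/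
theorem logAsymptotics_constant_scale (σseq : ℕ → ℝ) (hpos : ∀ j, 0 < σseq j)
    (σ : ℝ) (hσ : 0 ≤ σ) (hlim : Tendsto σseq atTop (nhds σ)) :
    ∀ ε ∈ Set.Ioo (0 : ℝ) 1,
      Tendsto (fun d : ℕ =>
          (Real.log (avgComplexity (fun j => omegaFn (σseq j)) d ε)
              - aSeq (fun j => omegaFn (σseq j)) d)
            / ((if σ = 0 then (1 : ℝ)
                else |Real.log (omegaFn σ)| * Real.sqrt (omegaFn σ) / (1 - omegaFn σ))
              * Real.sqrt d))
        atTop (nhds (stdGaussianQuantile (1 - ε ^ 2))) := by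
  intro ε hε
  have hω : Tendsto (fun j => omegaFn (σseq j)) atTop (nhds (omegaFn σ)) := by
    have hcont : Continuous (fun s : ℝ => (s ^ 2 + s * √(s ^ 2 + 4)) / 2) := by fun_prop
    have h := ((hcont.tendsto σ).comp hlim).const_add 1
    have h' := h.inv₀ (by positivity)
    rw [← omegaFn_eq σ hσ] at h'
    exact h'.congr fun j => (omegaFn_eq _ (hpos j).le).symm
  set ω := fun j => omegaFn (σseq j) with hωdef
  have h0 : ∀ j, 0 < ω j := fun j => omegaFn_pos _ (hpos j).le
  have h1 : ∀ j, ω j < 1 := fun j => omegaFn_lt_one _ (hpos j)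
  have hw0 := omegaFn_pos σ hσ
  -- lower bound
  obtain ⟨c, hc, hcω⟩ : ∃ c : ℝ, 0 < c ∧ ∀ j, c ≤ ω j := by
    obtain ⟨B, hB⟩ := (hω.inv₀ hw0.ne').bddAbove_range
    have hB : ∀ j, (ω j)⁻¹ ≤ B := fun j => hB ⟨j, rfl⟩
    have hBp : 0 < B := lt_of_lt_of_le (inv_pos.2 (h0 0)) (hB 0)
    exact ⟨B⁻¹, inv_pos.2 hBp, fun j => inv_le_of_inv_le₀ (h0 j) (hB j)⟩
  split_ifs with hs
  · refine main_general ω h0 h1 c hc hcω 1 one_pos ?_ ε hε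
    have hw1 : omegaFn σ = 1 := by rw [hs]; simp [omegaFn]
    rw [hw1] at hω
    have hr : Tendsto (fun j => -Real.log (ω j) / (1 - ω j)) atTop (nhds 1) := by
      refine tendsto_of_tendsto_of_tendsto_of_le_of_le (g := fun _ => (1:ℝ)) (h := fun j => (ω j)⁻¹) tendsto_const_nhds (by simpa using hω.inv₀ one_ne_zero) ?_ ?_
      · intro j
        have b : 0 < 1 - ω j := by linarith [h1 j]
        simp only
        rw [le_div_iff₀ b]
        linarith [Real.log_le_sub_one_of_pos (h0 j)]
      · intro j
        have a := h0 j
        have b : 0 < 1 - ω j := by linarith [h1 j]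
        simp only
        rw [div_le_iff₀ b]
        have h2 : (ω j)⁻¹ * (1 - ω j) = (ω j)⁻¹ - 1 := by field_simp
        rw [h2]
        linarith [Real.one_sub_inv_le_log_of_pos a]
    have := (hr.pow 2).mul hω
    simp only [one_pow, mul_one] at this ⊢
    refine this.congr fun j => ?_
    rw [div_pow]; ring
  · have hσ' : 0 < σ := lt_of_le_of_ne hσ (Ne.symm hs)
    have hw1 := omegaFn_lt_one σ hσ'
    have hlog := Real.log_neg hw0 hw1
    have hb : 0 < 1 - omegaFn σ := by linarith
    refine main_general ω h0 h1 c hc hcω _ ?_ ?_ ε hε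
    · have : 0 < |Real.log (omegaFn σ)| := abs_pos.2 hlog.ne
      positivity
    · rw [div_pow, mul_pow, Real.sq_sqrt hw0.le, sq_abs, ← neg_sq (Real.log _)]
      have hl : Tendsto (fun j => Real.log (ω j)) atTop (nhds (Real.log (omegaFn σ))) := hω.log hw0.ne'
      exact ((hl.neg.pow 2).mul hω).div ((hω.const_sub 1).pow 2) (by positivity)
end

section
/- Let (σ_j)_{j≥1} be a sequence of positive real numbers satisfying σ_j²/(β j^α) → 1 as j → ∞ for some constants α ∈ (0,1) and β > 0, let ω_j = ω(σ_j), and let n_d(ε) be the average case approximation complexity built from (ω_j). Define a_d = Σ_{j=1}^d ( |ln ω_j| ω_j/(1−ω_j) + |ln(1−ω_j)| ) and b_d = (α/√((1−α)β)) · d^{(1−α)/2} · ln d. Then for every ε ∈ (0,1), (ln n_d(ε) − a_d)/b_d → Φ⁻¹(1 − ε²) as d → ∞, where Φ is the cumulative distribution function of the standard Gaussian law and Φ⁻¹(p) = inf{x ∈ ℝ : Φ(x) ≥ p}. -/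
open Filter Set

open MeasureTheory ProbabilityTheory

namespace LogAsym

/-- Geometric law on `ℕ` with `P(n) = (1-w) w^n`. -/
noncomputable def geo (w : ℝ) : Measure ℕ :=
  geometricMeasure (Set.projIcc 0 1 zero_le_one (1 - w))

instance (w : ℝ) : IsProbabilityMeasure (geo w) := by unfold geo; infer_instance

lemma proj_coe {w : ℝ} (h0 : 0 < w) (h1 : w < 1) :
    ((Set.projIcc (0:ℝ) 1 zero_le_one (1 - w) : unitInterval) : ℝ) = 1 - w := by
  rw [Set.projIcc_of_mem zero_le_one (⟨by linarith, by linarith⟩ : 1 - w ∈ Set.Icc (0:ℝ) 1)]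

lemma proj_ne {w : ℝ} (h0 : 0 < w) (h1 : w < 1) :
    (Set.projIcc (0:ℝ) 1 zero_le_one (1 - w) : unitInterval) ≠ 0 := by
  intro h
  have := congrArg (Subtype.val) h
  rw [proj_coe h0 h1] at this
  simp at this
  linarith

lemma geo_real_singleton {w : ℝ} (h0 : 0 < w) (h1 : w < 1) (n : ℕ) :
    (geo w).real {n} = (1 - w) * w ^ n := by
  unfold geo
  rw [geometricMeasure_real_singleton (proj_ne h0 h1), proj_coe h0 h1]
  ring

lemma integral_geo_exp {w : ℝ} (h0 : 0 < w) (h1 : w < 1) (s : ℝ) :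
    ∫ n, Complex.exp (s * (n : ℝ) * Complex.I) ∂(geo w)
      = (1 - w) / (1 - w * Complex.exp (s * Complex.I)) := by
  unfold geo
  rw [integral_geometricMeasure (proj_ne h0 h1), proj_coe h0 h1]
  have hn : ‖(w : ℂ) * Complex.exp (s * Complex.I)‖ < 1 := by
    rw [norm_mul, Complex.norm_exp_ofReal_mul_I, mul_one, Complex.norm_real, Real.norm_eq_abs,
      abs_of_pos h0]
    exact h1
  have h := (hasSum_geometric_of_norm_lt_one hn).mul_left ((1 : ℂ) - w)
  rw [div_eq_mul_inv, ← h.tsum_eq]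
  congr 1
  ext n
  rw [mul_pow, ← Complex.exp_nat_mul, Complex.real_smul]
  push_cast
  rw [show (s : ℂ) * n * Complex.I = n * (s * Complex.I) by ring]
  ring

/-- The product law. -/
noncomputable def PP (ω : ℕ → ℝ) (d : ℕ) : Measure (Fin d → ℕ) :=
  Measure.pi (fun j : Fin d => geo (ω j))

instance (ω : ℕ → ℝ) (d : ℕ) : IsProbabilityMeasure (PP ω d) := by unfold PP; infer_instance

/-- Eigenvalues. -/
noncomputable def lam (ω : ℕ → ℝ) (d : ℕ) (k : Fin d → ℕ) : ℝ :=
  ∏ j : Fin d, (1 - ω j.1) * ω j.1 ^ k j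

variable {ω : ℕ → ℝ} {d : ℕ}

lemma lam_pos (h0 : ∀ j, 0 < ω j) (h1 : ∀ j, ω j < 1) (k : Fin d → ℕ) : 0 < lam ω d k :=
  Finset.prod_pos fun j _ => mul_pos (by linarith [h1 j]) (pow_pos (h0 j) _)

lemma PP_singleton (h0 : ∀ j, 0 < ω j) (h1 : ∀ j, ω j < 1) (k : Fin d → ℕ) :
    (PP ω d).real {k} = lam ω d k := by
  unfold PP lam
  rw [measureReal_def, Measure.pi_singleton, ENNReal.toReal_prod]
  exact Finset.prod_congr rfl fun j _ => geo_real_singleton (h0 j) (h1 j) _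

lemma lam_hasSum (h0 : ∀ j, 0 < ω j) (h1 : ∀ j, ω j < 1) : HasSum (lam ω d) 1 := by
  have h := Measure.tsum_indicator_apply_singleton (PP ω d) Set.univ MeasurableSet.univ
  simp only [Set.indicator_univ, measure_univ] at h
  have := (ENNReal.hasSum_toReal (f := fun k => (PP ω d) {k}) (by rw [h]; simp))
  rw [← ENNReal.tsum_toReal_eq (fun k => measure_ne_top _ _), h, ENNReal.toReal_one] at this
  convert this using 2 with k
  exact (PP_singleton h0 h1 k).symm

lemma PP_finset (h0 : ∀ j, 0 < ω j) (h1 : ∀ j, ω j < 1) (S : Finset (Fin d → ℕ)) :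
    (PP ω d).real S = ∑ k ∈ S, lam ω d k := by
  rw [← sum_measureReal_singleton]
  exact Finset.sum_congr rfl fun k _ => PP_singleton h0 h1 k

lemma compl_mass (h0 : ∀ j, 0 < ω j) (h1 : ∀ j, ω j < 1) (S : Finset (Fin d → ℕ)) :
    ∑' k : {k : Fin d → ℕ // k ∉ S}, ∏ j : Fin d, (1 - ω j.1) * ω j.1 ^ k.1 j
      = 1 - (PP ω d).real S := by
  have h := (lam_hasSum (d := d) h0 h1)
  have h2 := h.summable.sum_add_tsum_subtype_compl S
  rw [h.tsum_eq] at h2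
  rw [PP_finset h0 h1]
  simp only [lam] at h2 ⊢
  linarith

/-- Super-level sets of the eigenvalues, `U = -log lam`. -/
lemma finite_level (h0 : ∀ j, 0 < ω j) (h1 : ∀ j, ω j < 1) (y : ℝ) :
    {k : Fin d → ℕ | -Real.log (lam ω d k) ≤ y}.Finite := by
  have h := (lam_hasSum (d := d) h0 h1).summable.tendsto_cofinite_zero
  have h2 := h.eventually_lt_const (Real.exp_pos (-y))
  rw [Filter.eventually_cofinite] at h2
  refine h2.subset fun k hk => ?_
  simp only [Set.mem_ofPred_eq, not_lt] at hk ⊢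
  rw [← Real.le_log_iff_exp_le (lam_pos h0 h1 k)]
  linarith

lemma avg_spec (h0 : ∀ j, 0 < ω j) (h1 : ∀ j, ω j < 1) {ε : ℝ} {S : Finset (Fin d → ℕ)}
    (hS : 1 ≤ S.card) (hm : 1 - (PP ω d).real S ≤ ε ^ 2) :
    avgComplexity ω d ε ≤ S.card ∧ 1 ≤ avgComplexity ω d ε ∧
      ∃ T : Finset (Fin d → ℕ), T.card ≤ avgComplexity ω d ε ∧
        1 - (PP ω d).real T ≤ ε ^ 2 := by
  have hmem : S.card ∈ {n : ℕ | 1 ≤ n ∧ ∃ S : Finset (Fin d → ℕ), S.card ≤ n ∧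
    ∑' k : {k : Fin d → ℕ // k ∉ S}, ∏ j : Fin d, (1 - ω j.1) * ω j.1 ^ k.1 j ≤ ε ^ 2} :=
    ⟨hS, S, le_rfl, by rw [compl_mass h0 h1]; exact hm⟩
  refine ⟨Nat.sInf_le hmem, ?_⟩
  obtain ⟨ha, T, hT, hT2⟩ := Nat.sInf_mem ⟨_, hmem⟩
  rw [compl_mass h0 h1] at hT2
  exact ⟨ha, T, hT, hT2⟩

lemma level_set (h0 : ∀ j, 0 < ω j) (h1 : ∀ j, ω j < 1) {ε y : ℝ} (hε1 : ε ^ 2 < 1)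
    (hy : 1 - (PP ω d).real {k | -Real.log (lam ω d k) ≤ y} ≤ ε ^ 2) :
    ∃ S : Finset (Fin d → ℕ), 1 ≤ S.card ∧ 1 - (PP ω d).real S ≤ ε ^ 2 ∧
      (S.card : ℝ) ≤ Real.exp y := by
  refine ⟨(finite_level h0 h1 y).toFinset, ?_, ?_, ?_⟩
  · rw [Nat.one_le_iff_ne_zero, Finset.card_ne_zero]
    by_contra hne
    rw [Finset.not_nonempty_iff_eq_empty] at hne
    rw [Set.Finite.toFinset_eq_empty] at hne
    rw [hne, measureReal_empty] at hy
    linarith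
  · simpa using hy
  · have h := sum_le_hasSum (finite_level (d := d) h0 h1 y).toFinset
      (fun k _ => (lam_pos h0 h1 k).le) (lam_hasSum (d := d) h0 h1)
    have h2 : (finite_level (d := d) h0 h1 y).toFinset.card • Real.exp (-y) ≤ 1 := by
      refine le_trans (Finset.card_nsmul_le_sum _ _ _ fun k hk => ?_) h
      simp only [Set.Finite.mem_toFinset, Set.mem_ofPred_eq] at hk
      rw [← Real.le_log_iff_exp_le (lam_pos h0 h1 k)]
      linarith
    rw [nsmul_eq_mul, Real.exp_neg] at h2
    rwa [← div_eq_mul_inv, div_le_one (Real.exp_pos _)] at h2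

lemma avg_le (h0 : ∀ j, 0 < ω j) (h1 : ∀ j, ω j < 1) {ε y : ℝ} (hε1 : ε ^ 2 < 1)
    (hy : 1 - (PP ω d).real {k | -Real.log (lam ω d k) ≤ y} ≤ ε ^ 2) :
    Real.log (avgComplexity ω d ε) ≤ y := by
  obtain ⟨S, hS, hm, hc⟩ := level_set h0 h1 hε1 hy
  obtain ⟨ha, hb, -⟩ := avg_spec h0 h1 hS hm
  rw [Real.log_le_iff_le_exp (by exact_mod_cast hb)]
  exact le_trans (by exact_mod_cast ha) hc

lemma avg_ge (h0 : ∀ j, 0 < ω j) (h1 : ∀ j, ω j < 1) {ε y y' δ : ℝ} (hε1 : ε ^ 2 < 1)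
    (hy' : 1 - (PP ω d).real {k | -Real.log (lam ω d k) ≤ y'} ≤ ε ^ 2) (hδ : 0 < δ)
    (hy : (PP ω d).real {k | -Real.log (lam ω d k) ≤ y} + δ ≤ 1 - ε ^ 2) :
    y + Real.log δ ≤ Real.log (avgComplexity ω d ε) := by
  obtain ⟨S, hS, hm, hc⟩ := level_set h0 h1 hε1 hy'
  obtain ⟨-, hb, T, hT, hTm⟩ := avg_spec h0 h1 hS hm
  have hb' : (0:ℝ) < avgComplexity ω d ε := by exact_mod_cast hb
  classical
  set A := T.filter (fun k => -Real.log (lam ω d k) ≤ y)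
  set B := T.filter (fun k => ¬ (-Real.log (lam ω d k) ≤ y))
  have hsum : (PP ω d).real T = ∑ k ∈ A, lam ω d k + ∑ k ∈ B, lam ω d k := by
    rw [PP_finset h0 h1, Finset.sum_filter_add_sum_filter_not]
  have hA : ∑ k ∈ A, lam ω d k ≤ (PP ω d).real {k | -Real.log (lam ω d k) ≤ y} := by
    rw [← PP_finset h0 h1]
    refine measureReal_mono (fun k hk => ?_) 
    have : k ∈ A := hk
    exact (Finset.mem_filter.mp this).2
  have hB : ∑ k ∈ B, lam ω d k ≤ avgComplexity ω d ε * Real.exp (-y) := by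
    have : ∑ k ∈ B, lam ω d k ≤ B.card • Real.exp (-y) := by
      refine Finset.sum_le_card_nsmul _ _ _ fun k hk => ?_
      have := (Finset.mem_filter.mp hk).2
      rw [← Real.log_le_iff_le_exp (lam_pos h0 h1 k)]
      linarith
    rw [nsmul_eq_mul] at this
    refine this.trans ?_
    gcongr
    exact (Finset.card_filter_le _ _).trans hT
  have h3 : δ ≤ avgComplexity ω d ε * Real.exp (-y) := by linarith
  have h4 := Real.log_le_log hδ h3
  rw [Real.log_mul hb'.ne' (Real.exp_pos _).ne', Real.log_exp] at h4
  linarith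
lemma cdf_strictMono : StrictMono stdGaussianCDF := by
  intro x y hxy
  unfold stdGaussianCDF
  rw [cdf_eq_real, cdf_eq_real, ← Set.Iic_union_Ioc_eq_Iic hxy.le,
    measureReal_union (by
      rw [Set.disjoint_left]; intro a ha hb; exact absurd ha (not_le.mpr hb.1)) measurableSet_Ioc]
  have : 0 < (gaussianReal 0 1).real (Set.Ioc x y) := by
    rw [measureReal_def, ENNReal.toReal_pos_iff]
    refine ⟨?_, measure_lt_top _ _⟩
    rw [pos_iff_ne_zero]
    intro h
    have := gaussianReal_absolutelyContinuous' 0 (v := 1) one_ne_zero h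
    simp at this
    linarith
  linarith

lemma cdf_lt_of_lt {p x : ℝ} (hp : 0 < p) (h : x < stdGaussianQuantile p) :
    stdGaussianCDF x < p := by
  by_contra hc
  push Not at hc
  have hb : BddBelow {x : ℝ | p ≤ stdGaussianCDF x} := by
    have h1 := (tendsto_cdf_atBot (gaussianReal 0 1)).eventually_lt_const hp
    obtain ⟨b, hb⟩ := Filter.eventually_atBot.mp h1
    refine ⟨b, fun z hz => ?_⟩
    by_contra hzb
    push Not at hzb
    exact absurd (hb z hzb.le) (not_lt.mpr hz)
  exact absurd (csInf_le hb hc) (not_le.mpr h)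

lemma lt_cdf_of_lt {p x : ℝ} (hp : p < 1) (h : stdGaussianQuantile p < x) :
    p < stdGaussianCDF x := by
  have hne : {x : ℝ | p ≤ stdGaussianCDF x}.Nonempty := by
    have h1 := (tendsto_cdf_atTop (gaussianReal 0 1)).eventually_const_lt hp
    obtain ⟨b, hb⟩ := h1.exists
    exact ⟨b, hb.le⟩
  obtain ⟨y, hy, hyx⟩ := exists_lt_of_csInf_lt hne h
  exact lt_of_le_of_lt hy (cdf_strictMono hyx)

/-- Main reduction: convergence of distribution functions gives the asymptotics. -/
lemma reduction (h0 : ∀ j, 0 < ω j) (h1 : ∀ j, ω j < 1) (a b : ℕ → ℝ)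
    (hb : Tendsto b atTop atTop)
    (hclt : ∀ x : ℝ, Tendsto (fun d => (PP ω d).real {k | -Real.log (lam ω d k) ≤ a d + x * b d})
      atTop (nhds (stdGaussianCDF x))) (ε : ℝ) (hε : ε ∈ Set.Ioo (0:ℝ) 1) :
    Tendsto (fun d => (Real.log (avgComplexity ω d ε) - a d) / b d) atTop
      (nhds (stdGaussianQuantile (1 - ε ^ 2))) := by
  have he1 : ε ^ 2 < 1 := by nlinarith [hε.1, hε.2]
  have he0 : 0 < ε ^ 2 := by have := hε.1; positivity
  have hup : ∀ x, stdGaussianQuantile (1 - ε ^ 2) < x → ∀ᶠ d in atTop,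
      1 - (PP ω d).real {k | -Real.log (lam ω d k) ≤ a d + x * b d} ≤ ε ^ 2 := by
    intro x hx
    filter_upwards [(hclt x).eventually_const_lt (lt_cdf_of_lt (by linarith) hx)] with d hd
    linarith
  rw [tendsto_order]
  constructor
  · intro x hx
    obtain ⟨z, hxz, hz⟩ := exists_between hx
    have hc := cdf_lt_of_lt (by linarith) hz
    obtain ⟨c, hc1, hc2⟩ := exists_between hc
    have hδ : 0 < 1 - ε ^ 2 - c := by linarith
    have hlim : Tendsto (fun d => z + Real.log (1 - ε ^ 2 - c) / b d) atTop (nhds (z + 0)) :=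
      tendsto_const_nhds.add (hb.const_div_atTop _)
    rw [add_zero] at hlim
    filter_upwards [(hclt z).eventually_lt_const hc1, hup _ (lt_add_one _),
      hb.eventually_gt_atTop 0, hlim.eventually_const_lt hxz] with d hd1 hd2 hd3 hd4
    have := avg_ge h0 h1 he1 hd2 hδ (y := a d + z * b d) (by linarith)
    refine lt_of_lt_of_le hd4 ?_
    rw [le_div_iff₀ hd3, add_mul, div_mul_cancel₀ _ hd3.ne']
    linarith
  · intro x hx
    obtain ⟨z, hz, hxz⟩ := exists_between hx
    filter_upwards [hup z hz, hb.eventually_gt_atTop 0] with d hd1 hd3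
    have := avg_le h0 h1 he1 hd1
    refine lt_of_le_of_lt ?_ hxz
    rw [div_le_iff₀ hd3]
    linarith
/-- Odds of the geometric law. -/
noncomputable def mm (w : ℝ) : ℝ := w / (1 - w)

/-- Log characteristic function of the centred geometric law. -/
noncomputable def ff (w s : ℝ) : ℂ :=
  -(s * mm w * Complex.I) + Complex.log (1 - mm w * (Complex.exp (s * Complex.I) - 1))⁻¹

lemma norm_uu (w s : ℝ) (hm : 0 ≤ mm w) :
    ‖(mm w : ℂ) * (Complex.exp (s * Complex.I) - 1)‖ ≤ mm w * |s| := by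
  rw [norm_mul, Complex.norm_real, Real.norm_eq_abs, abs_of_nonneg hm]
  gcongr
  have := Real.norm_exp_I_mul_ofReal_sub_one_le (x := s)
  rwa [mul_comm, Real.norm_eq_abs] at this

lemma exp_ff {w : ℝ} (h0 : 0 < w) (h1 : w < 1) {s : ℝ} (hs : mm w * |s| ≤ 1 / 2) :
    Complex.exp (ff w s) = Complex.exp (-(s * mm w * Complex.I)) *
      ((1 - w) / (1 - w * Complex.exp (s * Complex.I))) := by
  have hm : 0 ≤ mm w := div_nonneg h0.le (by linarith)
  have hu := norm_uu w s hm
  have h1w : (1 : ℂ) - w ≠ 0 := by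
    rw [← Complex.ofReal_one, ← Complex.ofReal_sub, Complex.ofReal_ne_zero]; linarith
  have hne : (1 : ℂ) - mm w * (Complex.exp (s * Complex.I) - 1) ≠ 0 := by
    intro h
    have : (mm w : ℂ) * (Complex.exp (s * Complex.I) - 1) = 1 := by linear_combination -h
    rw [this, norm_one] at hu
    linarith
  unfold ff
  rw [Complex.exp_add, Complex.exp_log (inv_ne_zero hne)]
  congr 1
  have hmm : (mm w : ℂ) = w / (1 - w) := by unfold mm; push_cast; rfl
  have : (1 : ℂ) - mm w * (Complex.exp (s * Complex.I) - 1)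
      = (1 - w * Complex.exp (s * Complex.I)) / (1 - w) := by
    rw [hmm]; field_simp; ring
  rw [this, inv_div]

lemma ff_bound {w : ℝ} (h0 : 0 < w) (h1 : w < 1) {s : ℝ} (hs1 : |s| ≤ 1)
    (hs : mm w * |s| ≤ 1 / 2) :
    ‖ff w s + (mm w + mm w ^ 2) * s ^ 2 / 2‖ ≤ (mm w + mm w ^ 2 + mm w ^ 3) * |s| ^ 3 := by
  have hm : 0 ≤ mm w := div_nonneg h0.le (by linarith)
  have hu := norm_uu w s hm
  set m := mm w with hmdef
  set e := Complex.exp (s * Complex.I) with he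
  have hsn : ‖(s : ℂ) * Complex.I‖ = |s| := by simp
  have hx1 : ‖(s : ℂ) * Complex.I‖ ≤ 1 := by rw [hsn]; exact hs1
  have b1 : ‖e - 1‖ ≤ |s| := by
    have := Real.norm_exp_I_mul_ofReal_sub_one_le (x := s)
    rwa [mul_comm, Real.norm_eq_abs] at this
  have b2 : ‖e - (1 + s * Complex.I)‖ ≤ |s| ^ 2 := by
    have := Complex.exp_bound hx1 (n := 2) (by norm_num)
    rw [hsn] at this
    simp [Finset.sum_range_succ, Nat.factorial] at this
    refine this.trans ?_
    have : (0:ℝ) ≤ s ^ 2 := by positivity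
    norm_num
    linarith
  have b3 : ‖e - (1 + s * Complex.I - s ^ 2 / 2)‖ ≤ |s| ^ 3 := by
    have := Complex.exp_bound hx1 (n := 3) (by norm_num)
    rw [hsn] at this
    simp [Finset.sum_range_succ, Nat.factorial, mul_pow] at this
    have h3 : (0:ℝ) ≤ |s| ^ 3 := by positivity
    calc _ = _ := by congr 1; ring
      _ ≤ _ := this
      _ ≤ _ := by norm_num; linarith
  have b4 : ‖e - 1 + s * Complex.I‖ ≤ 2 * |s| := by
    refine (norm_add_le _ _).trans ?_
    rw [hsn]; linarith
  have hu1 : ‖(m : ℂ) * (e - 1)‖ < 1 := by linarith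
  have b5 : ‖Complex.log (1 - m * (e - 1))⁻¹ - (m * (e - 1) + (m * (e - 1)) ^ 2 / 2)‖
      ≤ m ^ 3 * |s| ^ 3 := by
    have := Complex.norm_log_one_sub_inv_add_logTaylor_neg_le 2 hu1
    have e1 : Complex.logTaylor (2 + 1) (-((m : ℂ) * (e - 1)))
        = -(m * (e - 1) + (m * (e - 1)) ^ 2 / 2) := by
      simp [Complex.logTaylor_succ, Complex.logTaylor_zero]
      ring
    rw [e1, ← sub_eq_add_neg] at this
    refine this.trans ?_
    have h2 : (1 - ‖(m : ℂ) * (e - 1)‖)⁻¹ ≤ 2 := by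
      rw [inv_le_comm₀ (by linarith) (by norm_num)]
      linarith
    have h3 : ‖(m : ℂ) * (e - 1)‖ ^ (2 + 1) ≤ m ^ 3 * |s| ^ 3 := by
      rw [← mul_pow]; exact pow_le_pow_left₀ (norm_nonneg _) hu 3
    have h4 : (0:ℝ) ≤ m ^ 3 * |s| ^ 3 := by positivity
    calc _ ≤ (m ^ 3 * |s| ^ 3) * 2 / ((2:ℕ) + 1) := by gcongr
      _ ≤ _ := by push_cast; linarith
  have key : ff w s + (m + m ^ 2) * s ^ 2 / 2
      = (Complex.log (1 - m * (e - 1))⁻¹ - (m * (e - 1) + (m * (e - 1)) ^ 2 / 2))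
        + m * (e - (1 + s * Complex.I - s ^ 2 / 2))
        + m ^ 2 / 2 * ((e - (1 + s * Complex.I)) * (e - 1 + s * Complex.I)) := by
    unfold ff
    rw [← hmdef, ← he]
    ring_nf
    rw [Complex.I_sq]
    ring
  rw [key]
  refine (norm_add₃_le).trans ?_
  have c1 : ‖(m : ℂ) * (e - (1 + s * Complex.I - s ^ 2 / 2))‖ ≤ m * |s| ^ 3 := by
    rw [norm_mul, Complex.norm_real, Real.norm_eq_abs, abs_of_nonneg hm]
    gcongr
  have c2 : ‖(m : ℂ) ^ 2 / 2 * ((e - (1 + s * Complex.I)) * (e - 1 + s * Complex.I))‖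
      ≤ m ^ 2 * |s| ^ 3 := by
    rw [norm_mul, norm_mul, norm_div, norm_pow, Complex.norm_real, Real.norm_eq_abs,
      abs_of_nonneg hm]
    calc _ ≤ m ^ 2 / ‖(2:ℂ)‖ * (|s| ^ 2 * (2 * |s|)) := by gcongr
      _ = _ := by rw [Complex.norm_ofNat]; ring
  linarith

lemma neg_log_lam (h0 : ∀ j, 0 < ω j) (h1 : ∀ j, ω j < 1) (k : Fin d → ℕ) :
    -Real.log (lam ω d k) - aSeq ω d
      = ∑ j : Fin d, |Real.log (ω j)| * ((k j : ℝ) - mm (ω j)) := by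
  unfold lam aSeq mm
  rw [Real.log_prod (fun (j : Fin d) _ =>
    (mul_pos (by linarith [h1 j] : 0 < 1 - ω j) (pow_pos (h0 j) (k j))).ne'), Finset.sum_range,
    ← Finset.sum_neg_distrib, ← Finset.sum_sub_distrib]
  refine Finset.sum_congr rfl fun j _ => ?_
  have a1 : (0:ℝ) < 1 - ω j := by linarith [h1 j]
  rw [Real.log_mul a1.ne' (pow_pos (h0 j) _).ne', Real.log_pow,
    abs_of_neg (Real.log_neg (h0 j) (h1 j)),
    abs_of_neg (Real.log_neg a1 (by linarith [h0 j]))]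
  ring

/-- Normalised variable. -/
noncomputable def WW (ω : ℕ → ℝ) (b : ℕ → ℝ) (d : ℕ) (k : Fin d → ℕ) : ℝ :=
  (-Real.log (lam ω d k) - aSeq ω d) / b d

lemma charFun_WW (h0 : ∀ j, 0 < ω j) (h1 : ∀ j, ω j < 1) (b : ℕ → ℝ) (t : ℝ)
    (hs : ∀ j < d, mm (ω j) * |t * |Real.log (ω j)| / b d| ≤ 1 / 2) :
    charFun ((PP ω d).map (WW ω b d)) t
      = Complex.exp (∑ j ∈ Finset.range d, ff (ω j) (t * |Real.log (ω j)| / b d)) := by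
  rw [charFun_apply_real, integral_map (by fun_prop) (by fun_prop)]
  have : ∀ k : Fin d → ℕ, Complex.exp (t * (WW ω b d k : ℝ) * Complex.I)
      = ∏ j : Fin d, (fun (j : Fin d) (n : ℕ) =>
        Complex.exp (-(((t * |Real.log (ω j)| / b d : ℝ) : ℂ) * mm (ω j) * Complex.I)) *
        Complex.exp (((t * |Real.log (ω j)| / b d : ℝ) : ℂ) * (n : ℝ) * Complex.I)) j (k j) := by
    intro k
    unfold WW
    rw [neg_log_lam h0 h1]
    simp only [← Complex.exp_add]
    rw [← Complex.exp_sum]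
    congr 1
    push_cast
    rw [Finset.sum_div, Finset.mul_sum, Finset.sum_mul]
    refine Finset.sum_congr rfl fun j _ => ?_
    ring
  rw [integral_congr_ae (Filter.Eventually.of_forall this)]
  unfold PP
  refine (integral_fintype_prod_eq_prod (μ := fun j : Fin d => geo (ω j))
    (fun (j : Fin d) (n : ℕ) =>
        Complex.exp (-(((t * |Real.log (ω j)| / b d : ℝ) : ℂ) * mm (ω j) * Complex.I)) *
        Complex.exp (((t * |Real.log (ω j)| / b d : ℝ) : ℂ) * (n : ℝ) * Complex.I))).trans ?_
  rw [Complex.exp_sum, Finset.prod_range]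
  refine Finset.prod_congr rfl fun j _ => ?_
  rw [integral_const_mul, integral_geo_exp (h0 j) (h1 j), exp_ff (h0 j) (h1 j) (hs j j.2)]

lemma clt (h0 : ∀ j, 0 < ω j) (h1 : ∀ j, ω j < 1) (M : ℝ) (hM : ∀ j, mm (ω j) ≤ M)
    (b δ : ℕ → ℝ) (hb : Tendsto b atTop atTop) (hδ : Tendsto δ atTop (nhds 0))
    (hLδ : ∀ᶠ d in atTop, ∀ j < d, |Real.log (ω j)| / b d ≤ δ d)
    (hV : Tendsto (fun d => (∑ j ∈ Finset.range d,
      (mm (ω j) + mm (ω j) ^ 2) * |Real.log (ω j)| ^ 2) / b d ^ 2) atTop (nhds 1)) (t : ℝ) :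
    Tendsto (fun d => charFun ((PP ω d).map (WW ω b d)) t) atTop
      (nhds (charFun (gaussianReal 0 1) t)) := by
  have hm0 : ∀ j, 0 ≤ mm (ω j) := fun j => div_nonneg (h0 j).le (by linarith [h1 j])
  have hM0 : 0 ≤ M := (hm0 0).trans (hM 0)
  have hev : ∀ᶠ d in atTop, ∀ j < d, |t * |Real.log (ω j)| / b d| ≤ |t| * δ d ∧
      |t * |Real.log (ω j)| / b d| ≤ 1 ∧ mm (ω j) * |t * |Real.log (ω j)| / b d| ≤ 1 / 2 := by
    have l1 : Tendsto (fun d => |t| * δ d) atTop (nhds 0) := by simpa using hδ.const_mul |t|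
    have l2 : Tendsto (fun d => M * (|t| * δ d)) atTop (nhds 0) := by simpa using l1.const_mul M
    filter_upwards [hLδ, hb.eventually_gt_atTop 0, l1.eventually_lt_const one_pos,
      l2.eventually_lt_const (by norm_num : (0:ℝ) < 1 / 2)] with d e1 e2 e3 e4 j hj
    have : |t * |Real.log (ω j)| / b d| ≤ |t| * δ d := by
      rw [mul_div_assoc, abs_mul, abs_of_nonneg (div_nonneg (abs_nonneg _) e2.le)]
      exact mul_le_mul_of_nonneg_left (e1 j hj) (abs_nonneg _)
    refine ⟨this, by linarith, ?_⟩
    have := mul_le_mul (hM j) this (abs_nonneg _) hM0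
    linarith
  have hS : Tendsto (fun d => ∑ j ∈ Finset.range d, ff (ω j) (t * |Real.log (ω j)| / b d)) atTop
      (nhds (-(t : ℂ) ^ 2 / 2)) := by
    set V : ℕ → ℝ := fun d => (∑ j ∈ Finset.range d,
      (mm (ω j) + mm (ω j) ^ 2) * |Real.log (ω j)| ^ 2) / b d ^ 2 with hVdef
    have hVc : Tendsto (fun d => -((t ^ 2 / 2 * V d : ℝ) : ℂ)) atTop (nhds (-(t : ℂ) ^ 2 / 2)) := by
      have := ((Complex.continuous_ofReal.tendsto _).comp (hV.const_mul (t ^ 2 / 2))).neg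
      rw [show (-(t : ℂ) ^ 2 / 2) = -((t ^ 2 / 2 * 1 : ℝ) : ℂ) by push_cast; ring]
      exact this
    have hd : Tendsto (fun d => ∑ j ∈ Finset.range d, ff (ω j) (t * |Real.log (ω j)| / b d)
        - (-((t ^ 2 / 2 * V d : ℝ) : ℂ))) atTop (nhds 0) := by
      have hz : Tendsto (fun d => (1 + M) * (|t| * δ d) * (t ^ 2 * V d)) atTop (nhds 0) := by
        have := ((hδ.const_mul |t|).const_mul (1 + M)).mul (hV.const_mul (t ^ 2))
        simpa using this
      refine squeeze_zero_norm' ?_ hz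
      filter_upwards [hev] with d hd
      have e1 : ∀ j, (mm (ω j) + mm (ω j) ^ 2) * (t * |Real.log (ω j)| / b d) ^ 2
          = t ^ 2 * ((mm (ω j) + mm (ω j) ^ 2) * |Real.log (ω j)| ^ 2 / b d ^ 2) := by
        intro j; ring
      have e2 : t ^ 2 * V d = ∑ j ∈ Finset.range d,
          (mm (ω j) + mm (ω j) ^ 2) * (t * |Real.log (ω j)| / b d) ^ 2 := by
        simp_rw [e1]
        rw [← Finset.mul_sum, ← Finset.sum_div]
      have e3 : ((t ^ 2 / 2 * V d : ℝ) : ℂ) = ∑ j ∈ Finset.range d,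
          ((mm (ω j) : ℂ) + (mm (ω j) : ℂ) ^ 2) * ((t * |Real.log (ω j)| / b d : ℝ) : ℂ) ^ 2 / 2 := by
        rw [show t ^ 2 / 2 * V d = (t ^ 2 * V d) / 2 by ring, e2, Finset.sum_div]
        push_cast
        rfl
      rw [sub_neg_eq_add, e3, ← Finset.sum_add_distrib, e2, Finset.mul_sum]
      refine norm_sum_le_of_le _ fun j hj => ?_
      obtain ⟨f1, f2, f3⟩ := hd j (Finset.mem_range.mp hj)
      refine (ff_bound (h0 j) (h1 j) f2 f3).trans ?_
      set s := t * |Real.log (ω j)| / b d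
      have hmj := hm0 j
      have hMj := hM j
      calc (mm (ω j) + mm (ω j) ^ 2 + mm (ω j) ^ 3) * |s| ^ 3
          ≤ ((1 + M) * (mm (ω j) + mm (ω j) ^ 2)) * |s| ^ 3 := by
            gcongr
            have : mm (ω j) ^ 3 ≤ M * mm (ω j) ^ 2 := by
              rw [pow_succ, mul_comm]; gcongr
            have : 0 ≤ M * mm (ω j) := by positivity
            linarith
        _ = ((1 + M) * (mm (ω j) + mm (ω j) ^ 2) * s ^ 2) * |s| := by
            rw [← sq_abs s]; ring
        _ ≤ ((1 + M) * (mm (ω j) + mm (ω j) ^ 2) * s ^ 2) * (|t| * δ d) := by gcongr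
        _ = _ := by ring
    have := hd.add hVc
    simpa using this
  have hg : charFun (gaussianReal 0 1) t = Complex.exp (-(t : ℂ) ^ 2 / 2) := by
    rw [charFun_gaussianReal]; congr 1; simp; ring
  rw [hg]
  refine Tendsto.congr' ?_ ((Complex.continuous_exp.tendsto _).comp hS)
  filter_upwards [hev] with d hd
  rw [charFun_WW h0 h1 b t (fun j hj => (hd j hj).2.2)]
  rfl

lemma clt_cdf (h0 : ∀ j, 0 < ω j) (h1 : ∀ j, ω j < 1) (M : ℝ) (hM : ∀ j, mm (ω j) ≤ M)
    (b δ : ℕ → ℝ) (hb : Tendsto b atTop atTop) (hδ : Tendsto δ atTop (nhds 0))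
    (hLδ : ∀ᶠ d in atTop, ∀ j < d, |Real.log (ω j)| / b d ≤ δ d)
    (hV : Tendsto (fun d => (∑ j ∈ Finset.range d,
      (mm (ω j) + mm (ω j) ^ 2) * |Real.log (ω j)| ^ 2) / b d ^ 2) atTop (nhds 1)) (x : ℝ) :
    Tendsto (fun d => (PP ω d).real {k | -Real.log (lam ω d k) ≤ aSeq ω d + x * b d})
      atTop (nhds (stdGaussianCDF x)) := by
  let μ : ℕ → ProbabilityMeasure ℝ := fun d =>
    ⟨(PP ω d).map (WW ω b d), Measure.isProbabilityMeasure_map (by fun_prop)⟩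
  let μ₀ : ProbabilityMeasure ℝ := ⟨gaussianReal 0 1, inferInstance⟩
  have hw : Tendsto μ atTop (nhds μ₀) :=
    ProbabilityMeasure.tendsto_of_tendsto_charFun (clt h0 h1 M hM b δ hb hδ hLδ hV)
  have := nullSingletonClass_gaussianReal (μ := 0) (v := 1) one_ne_zero
  have h2 := ProbabilityMeasure.tendsto_measure_of_null_frontier_of_tendsto' hw (E := Set.Iic x)
    (by rw [frontier_Iic]; exact measure_singleton (μ := gaussianReal 0 1) x)
  have h3 := (ENNReal.tendsto_toReal (measure_ne_top _ _)).comp h2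
  have h4 : stdGaussianCDF x = ((μ₀ : Measure ℝ) (Set.Iic x)).toReal := by
    unfold stdGaussianCDF
    rw [cdf_eq_real]; rfl
  rw [h4]
  refine h3.congr' ?_
  filter_upwards [hb.eventually_gt_atTop 0] with d hd
  simp only [Function.comp_apply, measureReal_def]
  change ((PP ω d).map (WW ω b d) (Set.Iic x)).toReal = _
  rw [Measure.map_apply (by fun_prop) measurableSet_Iic]
  congr 2
  ext k
  simp only [Set.mem_preimage, Set.mem_Iic, Set.mem_ofPred_eq, WW]
  rw [div_le_iff₀ hd, sub_le_iff_le_add']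
lemma omega_den {σ : ℝ} (hσ : 0 < σ) :
    1 < 1 + σ ^ 2 / 2 * (1 + Real.sqrt (1 + 4 / σ ^ 2)) := by
  have : 0 < σ ^ 2 / 2 * (1 + Real.sqrt (1 + 4 / σ ^ 2)) := by positivity
  linarith

lemma omega_pos {σ : ℝ} (hσ : 0 < σ) : 0 < omegaFn σ :=
  inv_pos.mpr (by linarith [omega_den hσ])

lemma omega_lt_one {σ : ℝ} (hσ : 0 < σ) : omegaFn σ < 1 :=
  inv_lt_one_of_one_lt₀ (omega_den hσ)

lemma omega_mul_sq {σ : ℝ} (hσ : 0 < σ) : omegaFn σ * σ ^ 2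
    = ((σ ^ 2)⁻¹ + 2⁻¹ * (1 + Real.sqrt (1 + 4 * (σ ^ 2)⁻¹)))⁻¹ := by
  unfold omegaFn
  have h : (σ ^ 2) ≠ 0 := by positivity
  have e : (σ ^ 2)⁻¹ + 2⁻¹ * (1 + Real.sqrt (1 + 4 * (σ ^ 2)⁻¹))
      = (1 + σ ^ 2 / 2 * (1 + Real.sqrt (1 + 4 / σ ^ 2))) / σ ^ 2 := by
    rw [← div_eq_mul_inv 4]
    field_simp
  rw [e, inv_div]
  exact (mul_comm _ _).trans (div_eq_mul_inv _ _).symm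

lemma tendsto_natpow {γ : ℝ} (hγ : 0 < γ) : Tendsto (fun j : ℕ => (j : ℝ) ^ γ) atTop atTop :=
  (tendsto_rpow_atTop hγ).comp tendsto_natCast_atTop_atTop

lemma tendsto_natlog : Tendsto (fun j : ℕ => Real.log (j : ℝ)) atTop atTop :=
  Real.tendsto_log_atTop.comp tendsto_natCast_atTop_atTop

section asym
variable {σseq : ℕ → ℝ} {α β : ℝ}

lemma omega_asymp (hpos : ∀ j, 0 < σseq j) (hα : 0 < α) (hβ : 0 < β)
    (hasymp : Tendsto (fun j : ℕ => (σseq j) ^ 2 / (β * (j : ℝ) ^ α)) atTop (nhds 1)) :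
    Tendsto (fun j : ℕ => omegaFn (σseq j) * (j : ℝ) ^ α) atTop (nhds β⁻¹) := by
  have hx : Tendsto (fun j => σseq j ^ 2) atTop atTop := by
    have h := hasymp.pos_mul_atTop one_pos ((tendsto_natpow hα).const_mul_atTop hβ)
    refine h.congr' ?_
    filter_upwards [eventually_gt_atTop 0] with j hj
    have : (0:ℝ) < j := by exact_mod_cast hj
    rw [div_mul_cancel₀]
    positivity
  have hi : Tendsto (fun j => (σseq j ^ 2)⁻¹) atTop (nhds 0) := hx.inv_tendsto_atTop
  have h1 : Tendsto (fun j => omegaFn (σseq j) * σseq j ^ 2) atTop (nhds 1) := by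
    have hs := (Real.continuous_sqrt.tendsto (1 + 4 * 0)).comp
      ((hi.const_mul 4).const_add (1:ℝ))
    have := (hi.add ((hs.const_add 1).const_mul (2⁻¹ : ℝ))).inv₀ (by norm_num)
    norm_num at this
    refine this.congr fun j => ?_
    rw [omega_mul_sq (hpos j)]
    norm_num [Function.comp]
  have h2 := (h1.mul (hasymp.inv₀ one_ne_zero)).mul_const β⁻¹
  simp only [inv_one, one_mul, mul_one] at h2
  refine h2.congr' ?_
  filter_upwards [eventually_gt_atTop 0] with j hj
  have : (0:ℝ) < j := by exact_mod_cast hj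
  have h3 : (0:ℝ) < (j:ℝ) ^ α := by positivity
  have h4 := hpos j
  field_simp

variable {ω : ℕ → ℝ}

lemma omega_zero (hα : 0 < α)
    (hc : Tendsto (fun j : ℕ => ω j * (j : ℝ) ^ α) atTop (nhds β⁻¹)) :
    Tendsto ω atTop (nhds 0) := by
  have := hc.mul (tendsto_natpow hα).inv_tendsto_atTop
  rw [mul_zero] at this
  refine this.congr' ?_
  filter_upwards [eventually_gt_atTop 0] with j hj
  have : (0:ℝ) < j := by exact_mod_cast hj
  have h3 : (0:ℝ) < (j:ℝ) ^ α := by positivity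
  simp only [Pi.inv_apply]
  field_simp

lemma L_ratio (h0 : ∀ j, 0 < ω j) (h1 : ∀ j, ω j < 1) (hβ : 0 < β)
    (hc : Tendsto (fun j : ℕ => ω j * (j : ℝ) ^ α) atTop (nhds β⁻¹)) :
    Tendsto (fun j : ℕ => |Real.log (ω j)| / Real.log j) atTop (nhds α) := by
  have hl : Tendsto (fun j : ℕ => Real.log (ω j * (j : ℝ) ^ α)) atTop (nhds (Real.log β⁻¹)) :=
    hc.log (by positivity)
  have h := (hl.div_atTop tendsto_natlog).const_sub α
  rw [sub_zero] at h
  refine h.congr' ?_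
  filter_upwards [eventually_gt_atTop 1] with j hj
  have hj0 : (1:ℝ) < j := by exact_mod_cast hj
  have h3 : (0:ℝ) < (j:ℝ) ^ α := by positivity
  have h4 := Real.log_pos hj0
  rw [abs_of_neg (Real.log_neg (h0 j) (h1 j)), Real.log_mul (h0 j).ne' h3.ne',
    Real.log_rpow (by linarith)]
  field_simp
  ring

lemma v_ratio (h0 : ∀ j, 0 < ω j) (h1 : ∀ j, ω j < 1) (hα : 0 < α) (hβ : 0 < β)
    (hc : Tendsto (fun j : ℕ => ω j * (j : ℝ) ^ α) atTop (nhds β⁻¹)) :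
    Tendsto (fun j : ℕ => ((mm (ω j) + mm (ω j) ^ 2) * |Real.log (ω j)| ^ 2) /
      ((j : ℝ) ^ (-α) * Real.log j ^ 2)) atTop (nhds (α ^ 2 / β)) := by
  have hz := omega_zero hα hc
  have hL := L_ratio h0 h1 hβ hc
  have h2 : Tendsto (fun j => ((1 - ω j) ^ 2)⁻¹) atTop (nhds ((1 - 0) ^ 2)⁻¹) :=
    ((hz.const_sub 1).pow 2).inv₀ (by norm_num)
  have h := (hc.mul h2).mul (hL.pow 2)
  have e : β⁻¹ * ((1 - 0) ^ 2)⁻¹ * α ^ 2 = α ^ 2 / β := by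
    rw [div_eq_mul_inv]; norm_num; ring
  rw [e] at h
  refine h.congr' ?_
  filter_upwards [eventually_gt_atTop 1] with j hj
  have hj0 : (1:ℝ) < j := by exact_mod_cast hj
  have h3 : (0:ℝ) < (j:ℝ) ^ α := by positivity
  have h4 := Real.log_pos hj0
  have h5 : 1 - ω j ≠ 0 := by linarith [h1 j]
  rw [Real.rpow_neg (by linarith)]
  unfold mm
  field_simp
  ring

/-- Comparison function. -/
noncomputable def BB (α x : ℝ) : ℝ := x ^ (1 - α) * Real.log x ^ 2

lemma BB_deriv {x : ℝ} (hx : 1 < x) : HasDerivAt (BB α)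
    (x ^ (-α) * Real.log x ^ 2 * ((1 - α) + 2 / Real.log x)) x := by
  have hx0 : x ≠ 0 := by linarith
  have h1 := Real.hasDerivAt_rpow_const (x := x) (p := 1 - α) (Or.inl hx0)
  have h2 := (Real.hasDerivAt_log hx0).pow 2
  have h := h1.mul h2
  have h4 := Real.log_pos hx
  refine HasDerivAt.congr_deriv (f := BB α) h ?_
  have e1 : x ^ (1 - α - 1) = x ^ (-α) := by congr 1; ring
  have e2 : x ^ (1 - α) = x * x ^ (-α) := by
    rw [sub_eq_add_neg, Real.rpow_add (by linarith), Real.rpow_one]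
  rw [e1]
  simp only [Pi.pow_apply]
  rw [e2]
  field_simp
  push_cast
  ring

lemma BB_diff : Tendsto (fun d : ℕ => (BB α ((d + 1 : ℕ) : ℝ) - BB α d) /
    ((d : ℝ) ^ (-α) * Real.log d ^ 2)) atTop (nhds (1 - α)) := by
  have hmv : ∀ d : ℕ, ∃ ξ : ℝ, 1 < d → ((d:ℝ) < ξ ∧ ξ < d + 1 ∧
      BB α ((d + 1 : ℕ) : ℝ) - BB α d
        = ξ ^ (-α) * Real.log ξ ^ 2 * ((1 - α) + 2 / Real.log ξ)) := by
    intro d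
    by_cases hd : 1 < d
    · have hd' : (1:ℝ) < d := by exact_mod_cast hd
      obtain ⟨ξ, hξ, he⟩ := exists_hasDerivAt_eq_slope (BB α)
        (fun x => x ^ (-α) * Real.log x ^ 2 * ((1 - α) + 2 / Real.log x))
        (show (d:ℝ) < d + 1 by linarith)
        (fun x hx => (BB_deriv (by linarith [hx.1])).continuousAt.continuousWithinAt)
        (fun x hx => BB_deriv (by linarith [hx.1]))
      refine ⟨ξ, fun _ => ⟨hξ.1, hξ.2, ?_⟩⟩
      rw [he]; push_cast; simp
    · exact ⟨0, fun h => absurd h hd⟩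
  choose ξ hξ using hmv
  have r1 : Tendsto (fun d : ℕ => ξ d / d) atTop (nhds 1) := by
    have hu : Tendsto (fun d : ℕ => 1 + 1 / (d:ℝ)) atTop (nhds 1) := by
      simpa using (tendsto_one_div_atTop_nhds_zero_nat (𝕜 := ℝ)).const_add 1
    refine tendsto_of_tendsto_of_tendsto_of_le_of_le' tendsto_const_nhds hu ?_ ?_
    · filter_upwards [eventually_gt_atTop 1] with d hd
      have hd' : (1:ℝ) < d := by exact_mod_cast hd
      rw [le_div_iff₀ (by linarith)]; linarith [(hξ d hd).1]
    · filter_upwards [eventually_gt_atTop 1] with d hd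
      have hd' : (1:ℝ) < d := by exact_mod_cast hd
      rw [div_le_iff₀ (by linarith), add_mul, one_div_mul_cancel (by linarith)]
      linarith [(hξ d hd).2.1]
  have r2 : Tendsto (fun d : ℕ => Real.log (ξ d) / Real.log d) atTop (nhds 1) := by
    have h := ((r1.log one_ne_zero).div_atTop tendsto_natlog).const_add 1
    rw [add_zero] at h
    refine h.congr' ?_
    filter_upwards [eventually_gt_atTop 1] with d hd
    have hd' : (1:ℝ) < d := by exact_mod_cast hd
    have := Real.log_pos hd'
    rw [Real.log_div (by linarith [(hξ d hd).1]) (by linarith)]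
    field_simp
    ring
  have r3 : Tendsto (fun d : ℕ => 2 / Real.log (ξ d)) atTop (nhds 0) := by
    refine Tendsto.const_div_atTop (tendsto_atTop_mono' _ ?_ tendsto_natlog) _
    filter_upwards [eventually_gt_atTop 1] with d hd
    have hd' : (1:ℝ) < d := by exact_mod_cast hd
    exact Real.log_le_log (by linarith) (hξ d hd).1.le
  have h := ((r1.rpow_const (p := -α) (Or.inl one_ne_zero)).mul (r2.pow 2)).mul
    (r3.const_add (1 - α))
  simp only [Real.one_rpow, one_pow, one_mul, add_zero] at h
  refine h.congr' ?_
  filter_upwards [eventually_gt_atTop 1] with d hd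
  have hd' : (1:ℝ) < d := by exact_mod_cast hd
  have := Real.log_pos hd'
  have h3 : (0:ℝ) < (d:ℝ) ^ (-α) := by positivity
  rw [(hξ d hd).2.2, Real.div_rpow (by linarith [(hξ d hd).1]) (by linarith)]
  field_simp

lemma BB_tendsto (hα1 : α < 1) : Tendsto (fun d : ℕ => BB α d) atTop atTop := by
  unfold BB
  exact (tendsto_natpow (by linarith)).atTop_mul_atTop₀
    ((tendsto_pow_atTop two_ne_zero).comp tendsto_natlog)

lemma V_ratio (h0 : ∀ j, 0 < ω j) (h1 : ∀ j, ω j < 1) (hα : 0 < α) (hα1 : α < 1) (hβ : 0 < β)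
    (hc : Tendsto (fun j : ℕ => ω j * (j : ℝ) ^ α) atTop (nhds β⁻¹)) :
    Tendsto (fun d => (∑ j ∈ Finset.range d,
      (mm (ω j) + mm (ω j) ^ 2) * |Real.log (ω j)| ^ 2) / BB α d) atTop
      (nhds (α ^ 2 / ((1 - α) * β))) := by
  have hv := v_ratio h0 h1 hα hβ hc
  set v : ℕ → ℝ := fun j => (mm (ω j) + mm (ω j) ^ 2) * |Real.log (ω j)| ^ 2 with hvdef
  set g : ℕ → ℝ := fun j => BB α ((j + 1 : ℕ) : ℝ) - BB α j with hgdef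
  set κ := α ^ 2 / ((1 - α) * β) with hκ
  have hg := BB_diff (α := α)
  have hα1' : 0 < 1 - α := by linarith
  have hB0 : BB α ((0:ℕ):ℝ) = 0 := by simp [BB]
  have hsum : ∀ n, ∑ i ∈ Finset.range n, g i = BB α n := by
    intro n
    rw [hgdef, Finset.sum_range_sub (fun j : ℕ => BB α (j:ℝ)), hB0, sub_zero]
  have hgnn : 0 ≤ g := by
    intro n
    simp only [Pi.zero_apply, hgdef, sub_nonneg]
    rcases Nat.eq_zero_or_pos n with rfl | hn
    · rw [hB0]; unfold BB; positivity
    · have : (1:ℝ) ≤ n := by exact_mod_cast hn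
      have hl := Real.log_nonneg this
      unfold BB
      gcongr <;> simp
  have hr : Tendsto (fun j => v j / g j) atTop (nhds κ) := by
    have h := hv.div hg hα1'.ne'
    have e : α ^ 2 / β / (1 - α) = κ := by rw [hκ]; field_simp
    rw [e] at h
    refine h.congr' ?_
    filter_upwards [eventually_gt_atTop 1] with j hj
    have hj' : (1:ℝ) < j := by exact_mod_cast hj
    have := Real.log_pos hj'
    have h3 : (0:ℝ) < (j:ℝ) ^ (-α) := by positivity
    exact div_div_div_cancel_right₀ (by positivity) _ _
  have hgne : ∀ᶠ j in atTop, g j ≠ 0 := by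
    filter_upwards [hg.eventually_const_lt hα1'] with j hj hz
    rw [hgdef] at hz
    simp only at hz
    rw [hz] at hj
    simp at hj
  have ho : (fun j => v j - κ * g j) =o[atTop] g := by
    rw [Asymptotics.isLittleO_iff_tendsto' (hgne.mono fun j hj hz => absurd hz hj)]
    have := hr.sub_const κ
    rw [sub_self] at this
    refine this.congr' ?_
    filter_upwards [hgne] with j hj
    field_simp
  have hs := ho.sum_range hgnn (by simpa only [hsum] using BB_tendsto hα1)
  simp only [hsum, Finset.sum_sub_distrib, ← Finset.mul_sum] at hs
  have := hs.tendsto_div_nhds_zero.add_const κ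
  rw [zero_add] at this
  refine this.congr' ?_
  filter_upwards [(BB_tendsto hα1).eventually_gt_atTop 0] with d hd
  field_simp
  ring

lemma final (h0 : ∀ j, 0 < ω j) (h1 : ∀ j, ω j < 1) (hα : 0 < α) (hα1 : α < 1) (hβ : 0 < β)
    (hc : Tendsto (fun j : ℕ => ω j * (j : ℝ) ^ α) atTop (nhds β⁻¹))
    (ε : ℝ) (hε : ε ∈ Set.Ioo (0:ℝ) 1) :
    Tendsto (fun d : ℕ => (Real.log (avgComplexity ω d ε) - aSeq ω d)
            / (α / Real.sqrt ((1 - α) * β) * (d : ℝ) ^ ((1 - α) / 2) * Real.log d))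
        atTop (nhds (stdGaussianQuantile (1 - ε ^ 2))) := by
  have hα1' : 0 < 1 - α := by linarith
  set c := α / Real.sqrt ((1 - α) * β) with hcdef
  have hcpos : 0 < c := by positivity
  set b : ℕ → ℝ := fun d => c * (d : ℝ) ^ ((1 - α) / 2) * Real.log d with hbdef
  have hpow := tendsto_natpow (γ := (1 - α) / 2) (by linarith)
  have hb : Tendsto b atTop atTop :=
    (hpow.const_mul_atTop hcpos).atTop_mul_atTop₀ tendsto_natlog
  have hz := omega_zero hα hc
  have hmz : Tendsto (fun j => mm (ω j)) atTop (nhds 0) := by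
    have := hz.div (hz.const_sub 1) (by norm_num)
    rw [zero_div] at this
    exact this
  obtain ⟨M, hM⟩ := hmz.bddAbove_range
  obtain ⟨R, hR⟩ := (L_ratio h0 h1 hβ hc).bddAbove_range
  set K := |Real.log (ω 0)| + |Real.log (ω 1)| with hK
  have hK0 : 0 ≤ K := by positivity
  have hL : ∀ d j, j < d → |Real.log (ω j)| ≤ K + |R| * Real.log d := by
    intro d j hj
    have hd1 : (1:ℝ) ≤ d := by exact_mod_cast (by omega : 1 ≤ d)
    have hld := Real.log_nonneg hd1
    have hn : 0 ≤ |R| * Real.log d := by positivity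
    rcases lt_or_ge j 2 with h2 | h2
    · have hk1 := abs_nonneg (Real.log (ω 0))
      have hk2 := abs_nonneg (Real.log (ω 1))
      interval_cases j <;> linarith
    · have hj1 : (1:ℝ) < j := by exact_mod_cast (by omega : 1 < j)
      have hlj := Real.log_pos hj1
      have := hR (Set.mem_range_self j)
      rw [div_le_iff₀ hlj] at this
      have h3 : Real.log j ≤ Real.log d :=
        Real.log_le_log (by linarith) (by exact_mod_cast hj.le)
      have h4 : R * Real.log j ≤ |R| * Real.log d :=
        mul_le_mul (le_abs_self R) h3 hlj.le (abs_nonneg R)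
      linarith
  have hδ : Tendsto (fun d : ℕ => (K + |R| * Real.log d) / b d) atTop (nhds 0) := by
    have a1 : Tendsto (fun d => K / b d) atTop (nhds 0) := hb.const_div_atTop _
    have a2 : Tendsto (fun d : ℕ => |R| / (c * (d : ℝ) ^ ((1 - α) / 2))) atTop (nhds 0) :=
      (hpow.const_mul_atTop hcpos).const_div_atTop _
    have := a1.add a2
    rw [add_zero] at this
    refine this.congr' ?_
    filter_upwards [eventually_gt_atTop 1] with d hd
    have hd' : (1:ℝ) < d := by exact_mod_cast hd
    have := Real.log_pos hd'
    have h3 : (0:ℝ) < (d:ℝ) ^ ((1 - α) / 2) := by positivity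
    simp only [hbdef]
    field_simp
  have hV : Tendsto (fun d => (∑ j ∈ Finset.range d,
      (mm (ω j) + mm (ω j) ^ 2) * |Real.log (ω j)| ^ 2) / b d ^ 2) atTop (nhds 1) := by
    have hκ : (0:ℝ) < α ^ 2 / ((1 - α) * β) := by positivity
    have h := (V_ratio h0 h1 hα hα1 hβ hc).div_const (α ^ 2 / ((1 - α) * β))
    rw [div_self hκ.ne'] at h
    refine h.congr fun d => ?_
    have e : b d ^ 2 = BB α d * (α ^ 2 / ((1 - α) * β)) := by
      simp only [hbdef, BB, hcdef]
      rw [mul_pow, mul_pow, div_pow, Real.sq_sqrt (by positivity), ← Real.rpow_natCast ((d:ℝ) ^ _),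
        ← Real.rpow_mul (by positivity)]
      have : (1 - α) / 2 * ((2:ℕ):ℝ) = 1 - α := by push_cast; ring
      rw [this]
      ring
    rw [e, div_div]
  refine reduction h0 h1 (aSeq ω) b hb
    (clt_cdf h0 h1 M (fun j => hM (Set.mem_range_self j)) b
      (fun d : ℕ => (K + |R| * Real.log d) / b d) hb hδ ?_ hV) ε hε
  filter_upwards [hb.eventually_gt_atTop 0] with d hd j hj
  gcongr
  exact hL d j hj

end asym

end LogAsym

/-- If `σ_j² ~ β j^α` with `α ∈ (0,1)`, then `ln n_d(ε) = a_d + Φ⁻¹(1-ε²) b_d + o(b_d)`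
with `b_d = (α/√((1-α)β)) d^{(1-α)/2} ln d`. -/
theorem logAsymptotics_polynomial_scale (σseq : ℕ → ℝ) (hpos : ∀ j, 0 < σseq j)
    (α β : ℝ) (hα : α ∈ Set.Ioo (0 : ℝ) 1) (hβ : 0 < β)
    (hasymp : Tendsto (fun j : ℕ => (σseq j) ^ 2 / (β * (j : ℝ) ^ α)) atTop (nhds 1)) :
    ∀ ε ∈ Set.Ioo (0 : ℝ) 1,
      Tendsto (fun d : ℕ =>
          (Real.log (avgComplexity (fun j => omegaFn (σseq j)) d ε)
              - aSeq (fun j => omegaFn (σseq j)) d)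
            / (α / Real.sqrt ((1 - α) * β) * (d : ℝ) ^ ((1 - α) / 2) * Real.log d))
        atTop (nhds (stdGaussianQuantile (1 - ε ^ 2))) := by
  intro ε hε
  exact LogAsym.final (fun j => LogAsym.omega_pos (hpos j)) (fun j => LogAsym.omega_lt_one (hpos j))
    hα.1 hα.2 hβ (LogAsym.omega_asymp hpos hα.1 hβ hasymp) ε hε
end
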